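/- arXiv:math/0003123 — 3 statements merged into one kernel-verified Lean document; each statement's English description precedes it below -/
import Mathlib

section
/- Let g be a finite-dimensional complex semisimple Lie algebra with simple ideals g_1, …, g_n. (a) Every g-invariant ℝ-bilinear form B on g (g regarded as a real Lie algebra) is of the form B(X,Y) = Σ_{i=1}^{n} Im(λ_i K_{g_i}(X_i, Y_i)) for some λ = (λ_1,…,λ_n) ∈ ℂ^n, where X_i, Y_i denote the components of X, Y in g_i and K_{g_i} is the Killing form of g_i. (b) Every g-invariant ℂ-bilinear form on g is of the form K_λ(X,Y) = Σ_{i=1}^{n} λ_i K_{g_i}(X_i, Y_i) for some λ ∈ ℂ^n. In particular, every such form is symmetric and the simple ideals g_1, …, g_n are pairwise orthogonal for it. -/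
open Module

/-!
Over an algebraically closed field of characteristic zero the Killing form of a simple ideal is
nondegenerate, so Schur's lemma makes every invariant form on the ideal a multiple of it. Distinct
simple ideals are orthogonal for every invariant form because they commute and are perfect. An
invariant real form `B` on a complex semisimple algebra satisfies `B (c • X) Y = B X (c • Y)` for
complex `c`: when `Y` is a bracket `⁅Z, W⁆`, the scalar can be carried across inside `Z`, and
brackets span. Hence `B` is the real part of an invariant complex form, and multiplying the
coefficients of that form by `Complex.I` turns real parts into imaginary parts.
-/

section SimpleIdeals

variable {R L : Type*} [CommRing R] [LieRing L] [LieAlgebra R L]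

lemma isAtom_of_isSimple (I : LieIdeal R L) [LieAlgebra.IsSimple R I] : IsAtom I := by
  have : Nontrivial I := LieAlgebra.IsSimple.nontrivial R I
  refine ⟨(LieSubmodule.nontrivial_iff_ne_bot R L L).mp this, fun J hJ ↦ ?_⟩
  rcases LieAlgebra.IsSimple.eq_bot_or_eq_top (J.comap I.incl) with h | h
  · exact (LieIdeal.comap_incl_eq_bot.mp h).eq_bot_of_ge hJ.le
  · exact absurd (LieIdeal.comap_incl_eq_top.mp h) hJ.not_ge

lemma lie_self_eq_of_isSimple (I : LieIdeal R L) [LieAlgebra.IsSimple R I] : ⁅I, I⁆ = I :=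
  lie_eq_self_of_isAtom_of_nonabelian I (isAtom_of_isSimple I) (LieAlgebra.IsSimple.non_abelian R)

lemma lie_eq_bot_of_isSimple_of_ne {I J : LieIdeal R L} [LieAlgebra.IsSimple R I]
    [LieAlgebra.IsSimple R J] (h : I ≠ J) : ⁅I, J⁆ = ⊥ :=
  eq_bot_iff.mpr <| (LieSubmodule.lie_le_inf I J).trans
    ((isAtom_of_isSimple I).disjoint_of_ne (isAtom_of_isSimple J) h).le_bot

variable (R L) in
lemma lie_top_top_eq_top_of_isSemisimple [LieAlgebra.IsSemisimple R L] :
    ⁅(⊤ : LieIdeal R L), (⊤ : LieIdeal R L)⁆ = ⊤ := by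
  rw [eq_top_iff, ← LieAlgebra.IsSemisimple.sSup_atoms_eq_top]
  refine sSup_le fun J hJ ↦ ?_
  rw [← lie_eq_self_of_isAtom_of_nonabelian J hJ
    (LieAlgebra.IsSemisimple.non_abelian_of_isAtom J hJ)]
  exact LieSubmodule.mono_lie (le_sSup hJ) (le_sSup hJ)

end SimpleIdeals

section Schur

lemma eq_zero_of_lieInvariant_of_apply_eq_zero {R L M : Type*} [CommRing R] [LieRing L]
    [AddCommGroup M] [Module R M] [LieRingModule L M] [LieModule.IsIrreducible R L M]
    {Θ : LinearMap.BilinForm R M} (hΘ : Θ.lieInvariant L) {v : M} (hv : v ≠ 0) (hΘv : Θ v = 0) :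
    Θ = 0 := by
  let N : LieSubmodule R L M :=
    { LinearMap.ker Θ with
      lie_mem := fun {z x} (hx : Θ x = 0) ↦ LinearMap.ext fun y ↦ by simp [hΘ z x y, hx] }
  have hN : N ≠ ⊥ := fun h ↦ hv ((LieSubmodule.eq_bot_iff N).mp h v hΘv)
  have hN_top : N = ⊤ := (eq_bot_or_eq_top N).resolve_left hN
  have hker (x : M) : x ∈ N := hN_top ▸ LieSubmodule.mem_top x
  exact LinearMap.ext hker

variable {K L : Type*} [Field K] [IsAlgClosed K] [LieRing L]

theorem exists_eq_smul_of_lieInvariant {M : Type*} [AddCommGroup M] [Module K M]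
    [FiniteDimensional K M] [LieRingModule L M] [LieModule.IsIrreducible K L M]
    {Φ Ψ : LinearMap.BilinForm K M} (hΦ : Φ.lieInvariant L) (hΦ_nondeg : Φ.Nondegenerate)
    (hΨ : Ψ.lieInvariant L) :
    ∃ c : K, Ψ = c • Φ := by
  have : Nontrivial M := LieModule.nontrivial_of_isIrreducible K L M
  obtain ⟨c, hc⟩ := Module.End.exists_eigenvalue (Ψ.symmCompOfNondegenerate Φ hΦ_nondeg)
  obtain ⟨v, hv⟩ := hc.exists_hasEigenvector
  have hΨv : Ψ v = c • Φ v := by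
    rw [← Ψ.comp_symmCompOfNondegenerate_apply hΦ_nondeg, hv.apply_eq_smul, map_smul]
  have hinv : (Ψ - c • Φ).lieInvariant L := fun z x y ↦ by
    simp only [LinearMap.sub_apply, LinearMap.smul_apply, hΦ z x y, hΨ z x y, smul_neg]
    abel
  refine ⟨c, sub_eq_zero.mp <| eq_zero_of_lieInvariant_of_apply_eq_zero hinv hv.2 ?_⟩
  rw [LinearMap.sub_apply, LinearMap.smul_apply, hΨv, sub_self]

theorem exists_eq_smul_killingForm_of_lieInvariant [CharZero K] [LieAlgebra K L]
    [FiniteDimensional K L] [LieAlgebra.IsSimple K L] {Ψ : LinearMap.BilinForm K L}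
    (hΨ : Ψ.lieInvariant L) :
    ∃ c : K, Ψ = c • killingForm K L :=
  exists_eq_smul_of_lieInvariant (LieModule.traceForm_lieInvariant K L L)
    (LieAlgebra.IsKilling.killingForm_nondegenerate K L) hΨ

end Schur

section Orthogonality

lemma lie_le_orthogonal_of_lie_eq_bot {R L M : Type*} [CommRing R] [LieRing L] [LieAlgebra R L]
    [AddCommGroup M] [Module R M] [LieRingModule L M] {Φ : LinearMap.BilinForm R M}
    (hΦ : Φ.lieInvariant L) {I : LieIdeal R L} {N N' : LieSubmodule R L M} (h : ⁅I, N⁆ = ⊥) :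
    ⁅I, N'⁆ ≤ LieAlgebra.InvariantForm.orthogonal Φ hΦ N := by
  refine (LieSubmodule.lie_le_iff _ _ _).mpr fun z hz y _ ↦ ?_
  rw [LieAlgebra.InvariantForm.mem_orthogonal]
  intro x hx
  rw [← neg_eq_zero, ← hΦ, (LieSubmodule.lie_eq_bot_iff N I).mp h z hz x hx,
    LinearMap.map_zero₂]

lemma apply_eq_zero_of_lieInvariant_of_isSimple {R L : Type*} [CommRing R] [LieRing L]
    [LieAlgebra R L] {Φ : LinearMap.BilinForm R L} (hΦ : Φ.lieInvariant L) {I J : LieIdeal R L}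
    [LieAlgebra.IsSimple R I] [LieAlgebra.IsSimple R J] (h : I ≠ J)
    {x y : L} (hx : x ∈ I) (hy : y ∈ J) : Φ x y = 0 := by
  rw [← lie_self_eq_of_isSimple J] at hy
  exact (LieAlgebra.InvariantForm.mem_orthogonal Φ hΦ I y).mp
    (lie_le_orthogonal_of_lie_eq_bot hΦ (lie_eq_bot_of_isSimple_of_ne h.symm) hy) x hx

variable {K L ι : Type*} [Field K] [IsAlgClosed K] [CharZero K] [LieRing L] [LieAlgebra K L]
  [Fintype ι] {I : ι → LieIdeal K L} [∀ k, FiniteDimensional K (I k)]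
  [∀ k, LieAlgebra.IsSimple K (I k)] {Φ : LinearMap.BilinForm K L}

theorem exists_apply_sum_eq_sum_killingForm (hI : Function.Injective I)
    (hΦ : Φ.lieInvariant L) :
    ∃ c : ι → K, ∀ x y : ∀ k, I k,
      Φ (∑ k, (x k : L)) (∑ k, (y k : L)) = ∑ k, c k * killingForm K (I k) (x k) (y k) := by
  have hscalar (k : ι) : ∃ c : K, Φ.restrict (I k).toSubmodule = c • killingForm K (I k) :=
    exists_eq_smul_killingForm_of_lieInvariant (L := I k) fun z x y ↦ hΦ z x y
  choose c hc using hscalar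
  refine ⟨c, fun x y ↦ ?_⟩
  rw [LinearMap.BilinForm.sum_left]
  refine Finset.sum_congr rfl fun k _ ↦ ?_
  calc Φ (x k) (∑ l, (y l : L))
      = ∑ l, Φ (x k) (y l) := LinearMap.BilinForm.sum_right ..
    _ = Φ (x k) (y k) := Fintype.sum_eq_single k fun l hl ↦
        apply_eq_zero_of_lieInvariant_of_isSimple hΦ (hI.ne hl.symm) (x k).2 (y l).2
    _ = c k * killingForm K (I k) (x k) (y k) := LinearMap.congr_fun₂ (hc k) (x k) (y k)

theorem apply_sum_comm_of_lieInvariant (hI : Function.Injective I) (hΦ : Φ.lieInvariant L)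
    (x y : ∀ k, I k) :
    Φ (∑ k, (x k : L)) (∑ k, (y k : L)) = Φ (∑ k, (y k : L)) (∑ k, (x k : L)) := by
  obtain ⟨c, hc⟩ := exists_apply_sum_eq_sum_killingForm hI hΦ
  rw [hc, hc]
  exact Finset.sum_congr rfl fun k _ ↦ by rw [LieModule.traceForm_comm]

end Orthogonality

section RealForms

lemma apply_smul_comm_of_lieInvariant {R S L M : Type*} [CommRing R] [CommRing S] [LieRing L]
    [LieAlgebra S L] [AddCommGroup M] [Module R M] [Module S M] [LieRingModule L M]
    [LieModule S L M] (hM : ⁅(⊤ : LieIdeal S L), (⊤ : LieSubmodule S L M)⁆ = ⊤)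
    {B : LinearMap.BilinForm R M} (hB : B.lieInvariant L) (s : S) (x y : M) :
    B (s • x) y = B x (s • y) := by
  have hy : y ∈ Submodule.span S {⁅z, w⁆ | (z ∈ (⊤ : LieIdeal S L))
      (w ∈ (⊤ : LieSubmodule S L M))} := by
    rw [← LieSubmodule.lieIdeal_oper_eq_linear_span', hM]
    exact LieSubmodule.mem_top y
  induction hy using Submodule.span_induction generalizing s x with
  | mem _ h =>
    obtain ⟨z, -, w, -, rfl⟩ := h
    calc B (s • x) ⁅z, w⁆
        = -B ⁅z, s • x⁆ w := by rw [hB, neg_neg]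
      _ = -B ⁅s • z, x⁆ w := by rw [lie_smul, smul_lie]
      _ = B x (s • ⁅z, w⁆) := by rw [hB, neg_neg, smul_lie]
  | zero => simp only [smul_zero, map_zero]
  | add y₁ y₂ _ _ h₁ h₂ => rw [smul_add, map_add, map_add, h₁, h₂]
  | smul t y _ h => rw [← h, smul_smul, h, smul_smul, mul_comm]

variable {𝕜 V : Type*} [RCLike 𝕜] [AddCommGroup V] [Module ℝ V] [Module 𝕜 V] [IsScalarTower ℝ 𝕜 V]

/-- The `𝕜`-bilinear form with real part `B`, for a real bilinear form `B` across which the scalars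
of `𝕜` can be moved. It is built by extending each functional `B x`. -/
noncomputable def extendBilinForm (B : LinearMap.BilinForm ℝ V)
    (hB : ∀ (c : 𝕜) (x y : V), B (c • x) y = B x (c • y)) : LinearMap.BilinForm 𝕜 V where
  toFun x := Dual.extendRCLike (B x)
  map_add' x y := by
    rw [map_add]
    exact map_add (Dual.extendRCLikeₗ (𝕜 := 𝕜)) (B x) (B y)
  map_smul' c x := by
    ext y
    calc Dual.extendRCLike (B (c • x)) y
        = Dual.extendRCLike (B x) (c • y) := by
          simp only [Dual.extendRCLike_apply, hB, smul_comm c]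
      _ = c • Dual.extendRCLike (B x) y := map_smul _ c y

lemma re_extendBilinForm_apply (B : LinearMap.BilinForm ℝ V)
    (hB : ∀ (c : 𝕜) (x y : V), B (c • x) y = B x (c • y)) (x y : V) :
    RCLike.re (extendBilinForm B hB x y) = B x y :=
  Dual.re_extendRCLike_apply (B x) y

theorem exists_lieInvariant_re_eq {L : Type*} [LieRing L] [LieAlgebra 𝕜 L] [LieRingModule L V]
    [LieModule 𝕜 L V] (hV : ⁅(⊤ : LieIdeal 𝕜 L), (⊤ : LieSubmodule 𝕜 L V)⁆ = ⊤)
    {B : LinearMap.BilinForm ℝ V} (hB : B.lieInvariant L) :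
    ∃ K : LinearMap.BilinForm 𝕜 V, K.lieInvariant L ∧ ∀ x y, B x y = RCLike.re (K x y) := by
  have hsmul := apply_smul_comm_of_lieInvariant hV hB
  refine ⟨extendBilinForm B hsmul, fun z x y ↦ ?_,
    fun x y ↦ (re_extendBilinForm_apply B hsmul x y).symm⟩
  change Dual.extendRCLike (B ⁅z, x⁆) y = -Dual.extendRCLike (B x) ⁅z, y⁆
  simp only [Dual.extendRCLike_apply, hB z x, lie_smul, map_neg]
  ring

end RealForms

/-- Lemma 1 (i) of Delorme, "Classification des triples de Manin".
Let `g` be a finite dimensional complex semisimple Lie algebra with simple ideals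
`I 0, …, I (n-1)` (with associated projections `π k` onto the ideals).
(a) Every `g`-invariant `ℝ`-bilinear form `B` on `g` is of the form
`B X Y = ∑ k, Im (λ k * K_{g_k} (X_k, Y_k))` for some `λ : Fin n → ℂ`, where `X_k, Y_k`
are the components of `X, Y` in the ideal `I k` and `K_{g_k}` is the Killing form of `I k`.
(b) Every `g`-invariant `ℂ`-bilinear form is of the form
`K X Y = ∑ k, λ k * K_{g_k} (X_k, Y_k)`.
In particular such forms are symmetric, and the simple ideals are pairwise orthogonal. -/
theorem invariant_forms_on_complex_semisimple
    (g : Type*) [LieRing g] [LieAlgebra ℝ g] [LieAlgebra ℂ g] [IsScalarTower ℝ ℂ g]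
    [FiniteDimensional ℂ g] [LieAlgebra.IsSemisimple ℂ g]
    (n : ℕ) (I : Fin n → LieIdeal ℂ g) [∀ k, Module.Finite ℂ (I k)]
    (hsimple : ∀ k, LieAlgebra.IsSimple ℂ (I k))
    (hinj : Function.Injective I)
    (hall : ∀ J : LieIdeal ℂ g, LieAlgebra.IsSimple ℂ J → ∃ k, I k = J)
    (π : Fin n → (g →ₗ[ℂ] g))
    (hmem : ∀ k x, π k x ∈ I k)
    (hsum : ∀ x : g, ∑ k, π k x = x)
    (hproj : ∀ k, ∀ x ∈ I k, π k x = x)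
    (hzero : ∀ k l, k ≠ l → ∀ x ∈ I l, π k x = 0) :
    (∀ B : g →ₗ[ℝ] g →ₗ[ℝ] ℝ, (∀ Z X Y : g, B ⁅Z, X⁆ Y + B X ⁅Z, Y⁆ = 0) →
      (∃ lam : Fin n → ℂ, ∀ X Y : g,
        B X Y =
          ∑ k, (lam k * killingForm ℂ (I k) ⟨π k X, hmem k X⟩ ⟨π k Y, hmem k Y⟩).im) ∧
      (∀ X Y : g, B X Y = B Y X) ∧
      (∀ k l, k ≠ l → ∀ x ∈ I k, ∀ y ∈ I l, B x y = 0)) ∧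
    (∀ K : g →ₗ[ℂ] g →ₗ[ℂ] ℂ, (∀ Z X Y : g, K ⁅Z, X⁆ Y + K X ⁅Z, Y⁆ = 0) →
      (∃ lam : Fin n → ℂ, ∀ X Y : g,
        K X Y =
          ∑ k, lam k * killingForm ℂ (I k) ⟨π k X, hmem k X⟩ ⟨π k Y, hmem k Y⟩) ∧
      (∀ X Y : g, K X Y = K Y X) ∧
      (∀ k l, k ≠ l → ∀ x ∈ I k, ∀ y ∈ I l, K x y = 0)) := by
  have decompose (X : g) : ∑ k, ((⟨π k X, hmem k X⟩ : I k) : g) = X := hsum X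
  have complex_case (K : LinearMap.BilinForm ℂ g) (hK : K.lieInvariant g) :
      (∃ lam : Fin n → ℂ, ∀ X Y : g,
        K X Y = ∑ k, lam k * killingForm ℂ (I k) ⟨π k X, hmem k X⟩ ⟨π k Y, hmem k Y⟩) ∧
      (∀ X Y : g, K X Y = K Y X) ∧
      (∀ k l, k ≠ l → ∀ x ∈ I k, ∀ y ∈ I l, K x y = 0) := by
    obtain ⟨lam, hlam⟩ := exists_apply_sum_eq_sum_killingForm hinj hK
    refine ⟨⟨lam, fun X Y ↦ ?_⟩, fun X Y ↦ ?_, fun k l hkl x hx y hy ↦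
      apply_eq_zero_of_lieInvariant_of_isSimple hK (hinj.ne hkl) hx hy⟩
    · rw [← hlam, decompose, decompose]
    · rw [← decompose X, ← decompose Y, apply_sum_comm_of_lieInvariant hinj hK]
  refine ⟨fun B hB ↦ ?_, fun K hK ↦
    complex_case K fun Z X Y ↦ eq_neg_of_add_eq_zero_left (hK Z X Y)⟩
  obtain ⟨K, hK, hBK⟩ := exists_lieInvariant_re_eq (lie_top_top_eq_top_of_isSemisimple ℂ g)
    (B := B) fun Z X Y ↦ eq_neg_of_add_eq_zero_left (hB Z X Y)
  obtain ⟨⟨lam, hlam⟩, hsymm, horth⟩ := complex_case K hK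
  refine ⟨⟨fun k ↦ Complex.I * lam k, fun X Y ↦ ?_⟩, fun X Y ↦ ?_, fun k l hkl x hx y hy ↦ ?_⟩
  · simp only [hBK, hlam, map_sum, RCLike.re_eq_complex_re, mul_assoc, Complex.I_mul_im]
  · rw [hBK, hBK, hsymm]
  · rw [hBK, horth k l hkl x hx y hy, map_zero]
end

section
/- Let g be a finite-dimensional complex semisimple Lie algebra with simple ideals g_1, …, g_n, and let λ = (λ_1,…,λ_n) ∈ ℂ^n satisfy: whenever Σ_{i=1}^n q_i λ_i = 0 with all q_i nonnegative rational numbers, then all q_i are zero. Then the form B_λ (resp. K_λ) is special, i.e. its restriction to every complex semisimple Lie subalgebra of g is nondegenerate. In particular this holds whenever the λ_i are linearly independent over ℚ, or all λ_i are strictly positive real numbers. -/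
open Module

/-! Restricted to a nonzero ideal `J` of the semisimple subalgebra, `K_λ` is the combination
`∑ k, λ k • traceForm (I k)` of the trace forms of the representations of `J` on the ideals `I k`.
At the coroot `h` of a root `α` of `J`, the `k`-th trace form is the sum of the squares of the
weights of `I k` at `h`. Those weights are rational, so each trace is a nonnegative rational, and
if `J` lay in the radical of `K_λ` the condition on `λ` would make every weight of every `I k`
vanish at `h`. But the root vector `e` of `α` shifts weights by `α`, and `α h = 2`, so `e` would act
as zero on `g`, hence be central in a semisimple algebra. For `B_λ = Im K_λ`, replace `Y` by
`iY`. -/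

open LieModule LieAlgebra LieAlgebra.IsKilling Function

section NonnegRatIndependent

variable {ι K : Type*} [Fintype ι] [Field K]

/-- The condition on `λ` in the theorem: no nontrivial linear combination of the `λ k` with
nonnegative rational coefficients vanishes. This is weaker than linear independence over the
semiring `ℚ≥0`, which is injectivity of `q ↦ ∑ k, q k • λ k` and amounts to independence over
`ℚ`. -/
def NonnegRatIndependent (lam : ι → K) : Prop :=
  ∀ q : ι → ℚ, (∀ k, 0 ≤ q k) → (∑ k, (q k : K) * lam k) = 0 → ∀ k, q k = 0

namespace NonnegRatIndependent

theorem of_linearIndependent [CharZero K] {lam : ι → K} (h : LinearIndependent ℚ lam) :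
    NonnegRatIndependent lam := fun q _ hq ↦
  Fintype.linearIndependent_iff.mp h q <| by simpa only [Rat.smul_def] using hq

theorem of_pos [LinearOrder K] [IsStrictOrderedRing K] {lam : ι → K} (h : ∀ k, 0 < lam k) :
    NonnegRatIndependent lam := by
  intro q hq hsum k
  have hterm : ∀ k ∈ Finset.univ, 0 ≤ (q k : K) * lam k := fun k _ ↦
    mul_nonneg (Rat.cast_nonneg.mpr (hq k)) (h k).le
  have hk := (Finset.sum_eq_zero_iff_of_nonneg hterm).mp hsum k (Finset.mem_univ k)
  exact Rat.cast_eq_zero.mp ((mul_eq_zero_iff_right (h k).ne').mp hk)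

theorem map {K' : Type*} [Field K'] (f : K →+* K') {lam : ι → K} (h : NonnegRatIndependent lam) :
    NonnegRatIndependent fun k ↦ f (lam k) := fun q hq hsum ↦
  h q hq <| f.injective <| by simpa only [map_sum, map_mul, map_ratCast, map_zero] using hsum

end NonnegRatIndependent

end NonnegRatIndependent

section Coroot

variable {K L : Type*} [Field K] [LieRing L] [LieAlgebra K L]

/-- The elements of `rootSpace H α` shift weights by `α`, and `α + χ` is not a weight because it
does not vanish at `y`. -/
theorem lie_eq_zero_of_forall_weight_apply_eq_zero {H : LieSubalgebra K L} [LieRing.IsNilpotent H]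
    (M : Type*) [AddCommGroup M] [Module K M] [LieRingModule L M] [LieModule K L M]
    [FiniteDimensional K M] [IsTriangularizable K H M] {α : H → K} {y : H} (hαy : α y ≠ 0)
    (hM : ∀ χ : Weight K H M, χ y = 0) {e : L} (he : e ∈ rootSpace H α) (m : M) : ⁅e, m⁆ = 0 := by
  have hm : m ∈ ⨆ χ : Weight K H M, genWeightSpace M χ := by
    simp only [iSup_genWeightSpace_eq_top' K H M, LieSubmodule.mem_top]
  induction hm using LieSubmodule.iSup_induction' with
  | zero => exact lie_zero e
  | add m₁ m₂ _ _ h₁ h₂ => rw [lie_add, h₁, h₂, add_zero]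
  | mem χ m hm =>
    have hshift : ⁅e, m⁆ ∈ genWeightSpace M (α + (χ : H → K)) :=
      lie_mem_genWeightSpace_of_mem_genWeightSpace he hm
    have hbot : genWeightSpace M (α + (χ : H → K)) = ⊥ := by
      by_contra hne
      have hzero : α y + χ y = 0 := hM ⟨α + χ, hne⟩
      exact hαy (by rwa [hM χ, add_zero] at hzero)
    rwa [hbot, LieSubmodule.mem_bot] at hshift

variable [FiniteDimensional K L] [IsKilling K L]
  (H : LieSubalgebra K L) [H.IsCartanSubalgebra] [IsTriangularizable K H L]

theorem exists_weight_isNonZero [Nontrivial L] : ∃ α : Weight K H L, α.IsNonZero := by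
  by_contra! hnone
  have hempty : {α : Weight K H L | α.IsNonZero} = ∅ :=
    Set.eq_empty_of_forall_notMem fun α ↦ not_not_intro (hnone α)
  have hspan := span_weight_isNonZero_eq_top K L H
  rw [hempty, Set.image_empty, Submodule.span_empty] at hspan
  exact bot_ne_top hspan

variable [CharZero K] {H} {α : Weight K H L} (hα : α.IsNonZero)
  {M : Type*} [AddCommGroup M] [Module K M] [LieRingModule L M] [LieModule K L M]
  [FiniteDimensional K M]

include hα

theorem exists_rat_eq_weight_apply_coroot (χ : Weight K H M) :
    ∃ r : ℚ, χ (coroot α) = r := by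
  obtain ⟨a, b, hb, hab⟩ := exists_forall_mem_corootSpace_smul_add_eq_zero M (α : H → K) χ
    hα χ.genWeightSpace_ne_bot
  have hrel : (a : K) * 2 + b * χ (coroot α) = 0 := by
    have h := hab _ (coroot_mem_corootSpace α)
    rwa [Pi.add_apply, Pi.smul_apply, Pi.smul_apply, root_apply_coroot hα, zsmul_eq_mul,
      zsmul_eq_mul] at h
  have hb' : (b : K) ≠ 0 := Int.cast_ne_zero.mpr hb.ne'
  refine ⟨-(a * 2) / b, ?_⟩
  push_cast
  rw [eq_div_iff hb']
  linear_combination hrel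

variable [IsTriangularizable K H M]

variable (M) in
theorem exists_nonneg_rat_eq_traceForm_coroot :
    ∃ q : ℚ, 0 ≤ q ∧ traceForm K L M (coroot α : H) (coroot α : H) = q ∧
      (q = 0 → ∀ χ : Weight K H M, χ (coroot α) = 0) := by
  choose r hr using exists_rat_eq_weight_apply_coroot (M := M) hα
  have hterm : ∀ χ : Weight K H M, χ ∈ Finset.univ →
      0 ≤ (finrank K (genWeightSpace M χ) : ℚ) * (r χ * r χ) := fun χ _ ↦
    mul_nonneg (Nat.cast_nonneg _) (mul_self_nonneg _)
  refine ⟨∑ χ : Weight K H M, finrank K (genWeightSpace M χ) * (r χ * r χ),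
    Finset.sum_nonneg hterm, ?_, fun hq χ ↦ ?_⟩
  · calc traceForm K L M (coroot α : H) (coroot α : H)
        = traceForm K H M (coroot α) (coroot α) := rfl
      _ = _ := by
        rw [traceForm_eq_sum_finrank_nsmul_mul]
        push_cast
        simp only [hr, nsmul_eq_mul]
  · have : Nontrivial (genWeightSpace M χ) :=
      (LieSubmodule.nontrivial_iff_ne_bot K H M).mpr χ.genWeightSpace_ne_bot
    have hχ := (Finset.sum_eq_zero_iff_of_nonneg hterm).mp hq χ (Finset.mem_univ χ)
    have hrχ : r χ = 0 := by simpa [finrank_pos.ne'] using hχ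
    rw [hr, hrχ, Rat.cast_zero]

end Coroot

section WeightedTraceForm

variable {ι K L : Type*} [Fintype ι] [Field K] [LieRing L] [LieAlgebra K L]
  (M : ι → Type*) [∀ i, AddCommGroup (M i)] [∀ i, Module K (M i)] [∀ i, LieRingModule L (M i)]
  [∀ i, LieModule K L (M i)]

variable (L) in
/-- The combination `∑ i, λ i • traceForm K L (M i)` of the trace forms of representations `M i`
of `L`. When the `M i` are the simple ideals of `L`, it is the form `K_λ`. -/
noncomputable def weightedTraceForm (lam : ι → K) : LinearMap.BilinForm K L :=
  ∑ i, lam i • traceForm K L (M i)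

theorem weightedTraceForm_apply (lam : ι → K) (x y : L) :
    weightedTraceForm L M lam x y = ∑ i, lam i * traceForm K L (M i) x y := by
  simp only [weightedTraceForm, LinearMap.sum_apply, LinearMap.smul_apply, smul_eq_mul]

theorem weightedTraceForm_lieInvariant (lam : ι → K) :
    (weightedTraceForm L M lam).lieInvariant L := fun x y z ↦ by
  simp only [weightedTraceForm_apply, traceForm_lieInvariant K L _ x y z, mul_neg,
    Finset.sum_neg_distrib]

theorem weightedTraceForm_coe (lam : ι → K) (s : LieSubalgebra K L) (x y : s) :
    weightedTraceForm s M lam x y = weightedTraceForm L M lam x y := by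
  rw [weightedTraceForm_apply, weightedTraceForm_apply]
  rfl

variable [CharZero K] [IsAlgClosed K] [FiniteDimensional K L] [∀ i, FiniteDimensional K (M i)]
  {lam : ι → K} (hlam : NonnegRatIndependent lam)
include hlam

theorem exists_weightedTraceForm_self_ne_zero [IsKilling K L] [Nontrivial L]
    (hM : ∀ x : L, (∀ i (m : M i), ⁅x, m⁆ = 0) → x = 0) :
    ∃ h : L, weightedTraceForm L M lam h h ≠ 0 := by
  obtain ⟨x, _⟩ := exists_isCartanSubalgebra_engel K L
  obtain ⟨α, hα⟩ := exists_weight_isNonZero (LieSubalgebra.engel K x)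
  obtain ⟨e, he, he₀⟩ := α.exists_ne_zero
  choose q hq htrace hweight using fun i ↦ exists_nonneg_rat_eq_traceForm_coroot hα (M i)
  refine ⟨(coroot α : LieSubalgebra.engel K x), fun hsum ↦ he₀ (hM e fun i m ↦ ?_)⟩
  have hq₀ : ∀ i, q i = 0 := hlam q hq <| by
    simpa only [weightedTraceForm_apply, htrace, mul_comm] using hsum
  refine lie_eq_zero_of_forall_weight_apply_eq_zero (M i) ?_ (hweight i (hq₀ i)) he m
  rw [root_apply_coroot hα]
  exact two_ne_zero

theorem weightedTraceForm_nondegenerate [IsSemisimple K L]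
    (hM : ∀ x : L, (∀ i (m : M i), ⁅x, m⁆ = 0) → x = 0) :
    (weightedTraceForm L M lam).Nondegenerate := by
  let r : LieIdeal K L :=
    InvariantForm.orthogonal _ (weightedTraceForm_lieInvariant M lam) ⊤
  have hr : r = ⊥ := by
    by_contra hne
    obtain ⟨J, hJ, hJr⟩ := (eq_bot_or_exists_atom_le r).resolve_left hne
    have := IsSemisimple.isSimple_of_isAtom J hJ
    have := IsSimple.nontrivial K J
    obtain ⟨h, hh⟩ := exists_weightedTraceForm_self_ne_zero (L := J) M hlam fun x hx ↦
      Subtype.ext (hM x hx)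
    exact hh <| (weightedTraceForm_coe M lam J.toLieSubalgebra h h).trans <|
      hJr h.2 h (LieSubmodule.mem_top _)
  refine .ofSeparatingRight fun y hy ↦ ?_
  have hyr : y ∈ r := fun x _ ↦ hy x
  rwa [hr, LieSubmodule.mem_bot] at hyr

end WeightedTraceForm

section IsSpecial

variable (K : Type*) {L : Type*} [Field K] [LieRing L] [LieAlgebra K L]

/-- A form `B` is special if its restriction to every semisimple subalgebra is nondegenerate, here
encoded as triviality of the left kernel. No linearity is built in, so that the definition covers
both the `ℂ`-bilinear form `K_λ` and the `ℝ`-bilinear form `B_λ`. -/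
def IsSpecial {A : Type*} [Zero A] (B : L → L → A) : Prop :=
  ∀ s : LieSubalgebra K L, IsSemisimple K s → ∀ x ∈ s, (∀ y ∈ s, B x y = 0) → x = 0

variable {K}

theorem weightedTraceForm_isSpecial [CharZero K] [IsAlgClosed K] [FiniteDimensional K L]
    {ι : Type*} [Fintype ι] (M : ι → Type*) [∀ i, AddCommGroup (M i)] [∀ i, Module K (M i)]
    [∀ i, LieRingModule L (M i)] [∀ i, LieModule K L (M i)] [∀ i, FiniteDimensional K (M i)]
    {lam : ι → K} (hlam : NonnegRatIndependent lam)
    (hM : ∀ x : L, (∀ i (m : M i), ⁅x, m⁆ = 0) → x ∈ center K L) :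
    IsSpecial K fun x y ↦ weightedTraceForm L M lam x y := by
  intro s _ x hx hxs
  have hfaithful (z : s) (hz : ∀ i (m : M i), ⁅z, m⁆ = 0) : z = 0 := by
    have hzs : z ∈ center K s := fun y ↦ Subtype.ext (hM z hz y)
    rwa [center_eq_bot, LieSubmodule.mem_bot] at hzs
  refine congrArg Subtype.val ((weightedTraceForm_nondegenerate M hlam hfaithful).1 ⟨x, hx⟩ ?_)
  exact fun y ↦ (weightedTraceForm_coe M lam s ⟨x, hx⟩ y).trans (hxs y y.2)

theorem IsSpecial.im {L : Type*} [LieRing L] [LieAlgebra ℂ L] {B : LinearMap.BilinForm ℂ L}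
    (hB : IsSpecial ℂ fun x y ↦ B x y) : IsSpecial ℂ fun x y ↦ (B x y).im := by
  refine fun s hs x hx h ↦ hB s hs x hx fun y hy ↦ Complex.ext ?_ (h y hy)
  simpa using h (Complex.I • y) (s.smul_mem Complex.I hy)

end IsSpecial

section IdealDecomposition

variable {ι K L : Type*} [Field K] [LieRing L] [LieAlgebra K L] {I : ι → LieIdeal K L}

theorem mem_center_of_iSup_eq_top (hI : ⨆ k, I k = ⊤) {x : L}
    (hx : ∀ k (m : I k), ⁅x, m⁆ = 0) : x ∈ center K L := by
  intro y
  have hy : y ∈ ⨆ k, I k := hI ▸ LieSubmodule.mem_top y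
  rw [← lie_skew, neg_eq_zero]
  induction hy using LieSubmodule.iSup_induction' with
  | mem k m hm => exact congrArg Subtype.val (hx k ⟨m, hm⟩)
  | zero => exact lie_zero x
  | add m₁ m₂ _ _ h₁ h₂ => rw [lie_add, h₁, h₂, add_zero]

variable [Fintype ι] (hI : Pairwise (Disjoint on I))
include hI

theorem sum_lie_eq_of_pairwise_disjoint {x : ι → L} (hx : ∀ k, x k ∈ I k) {k : ι} {m : L}
    (hm : m ∈ I k) : ⁅∑ l, x l, m⁆ = ⁅x k, m⁆ := by
  rw [sum_lie]
  refine Finset.sum_eq_single k (fun l _ hlk ↦ ?_) fun hk ↦ absurd (Finset.mem_univ k) hk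
  have hmem : ⁅x l, m⁆ ∈ I l ⊓ I k :=
    LieSubmodule.lie_le_inf (I l) (I k) (LieSubmodule.lie_mem_lie (hx l) hm)
  rwa [(hI hlk).eq_bot, LieSubmodule.mem_bot] at hmem

theorem killingForm_eq_traceForm_sum {x y : ι → L} (hx : ∀ k, x k ∈ I k) (hy : ∀ k, y k ∈ I k)
    (k : ι) : killingForm K (I k) ⟨x k, hx k⟩ ⟨y k, hy k⟩ =
      traceForm K L (I k) (∑ l, x l) (∑ l, y l) := by
  have htoEnd {z : ι → L} (hz : ∀ k, z k ∈ I k) :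
      toEnd K (I k) (I k) ⟨z k, hz k⟩ = toEnd K L (I k) (∑ l, z l) := by
    ext m
    exact (sum_lie_eq_of_pairwise_disjoint hI hz m.2).symm
  rw [traceForm_apply_apply, traceForm_apply_apply, htoEnd hx, htoEnd hy]

end IdealDecomposition

theorem Blam_is_special_general
    {ι g : Type*} [Fintype ι] [LieRing g] [LieAlgebra ℂ g] [FiniteDimensional ℂ g]
    (I : ι → LieIdeal ℂ g)
    (π : ι → (g →ₗ[ℂ] g))
    (hmem : ∀ k x, π k x ∈ I k)
    (hsum : ∀ x : g, ∑ k, π k x = x)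
    (hproj : ∀ k, ∀ x ∈ I k, π k x = x)
    (hzero : ∀ k l, k ≠ l → ∀ x ∈ I l, π k x = 0)
    {lam : ι → ℂ} (hlam : NonnegRatIndependent lam)
    {Blam : g → g → ℝ}
    (hB : ∀ X Y : g,
      Blam X Y = ∑ k, (lam k * killingForm ℂ (I k) ⟨π k X, hmem k X⟩ ⟨π k Y, hmem k Y⟩).im)
    {Klam : g → g → ℂ}
    (hK : ∀ X Y : g,
      Klam X Y = ∑ k, lam k * killingForm ℂ (I k) ⟨π k X, hmem k X⟩ ⟨π k Y, hmem k Y⟩) :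
    IsSpecial ℂ Blam ∧ IsSpecial ℂ Klam := by
  have hdisj : Pairwise (Disjoint on I) := fun k l hkl ↦
    LieSubmodule.disjoint_toSubmodule.mp <| Submodule.disjoint_def.mpr fun x hxk hxl ↦
      (hproj k x hxk).symm.trans (hzero k l hkl x hxl)
  have htop : ⨆ k, I k = ⊤ := eq_top_iff.mpr fun x _ ↦
    hsum x ▸ sum_mem fun k _ ↦ LieSubmodule.mem_iSup_of_mem k (hmem k x)
  have hK' : Klam = fun X Y ↦ weightedTraceForm g (fun k ↦ I k) lam X Y := by
    ext X Y
    simp only [hK, weightedTraceForm_apply,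
      killingForm_eq_traceForm_sum hdisj (hmem · X) (hmem · Y), hsum]
  have hB' : Blam = fun X Y ↦ (weightedTraceForm g (fun k ↦ I k) lam X Y).im := by
    ext X Y
    rw [hB, ← Complex.im_sum, ← hK, hK']
  have hspecial := weightedTraceForm_isSpecial (fun k ↦ I k) hlam fun _ ↦
    mem_center_of_iSup_eq_top htop
  exact ⟨hB' ▸ hspecial.im, hK' ▸ hspecial⟩

/-- Lemma 2 (iv) of Delorme.
Let `g` be complex semisimple with simple ideals `I k` (projections `π k`) and
`λ : Fin n → ℂ` such that any vanishing `ℚ≥0`-linear combination of the `λ k` is trivial.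
Then `B_λ` (resp. `K_λ`) is special: its restriction to every complex semisimple Lie
subalgebra of `g` is nondegenerate.  The hypothesis holds when the `λ k` are linearly
independent over `ℚ`, or when all `λ k` are strictly positive reals. -/
theorem Blam_is_special
    (g : Type*) [LieRing g] [LieAlgebra ℝ g] [LieAlgebra ℂ g] [IsScalarTower ℝ ℂ g]
    [FiniteDimensional ℂ g] [LieAlgebra.IsSemisimple ℂ g]
    (n : ℕ) (I : Fin n → LieIdeal ℂ g) [∀ k, Module.Finite ℂ (I k)]
    (hsimple : ∀ k, LieAlgebra.IsSimple ℂ (I k))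
    (hinj : Function.Injective I)
    (hall : ∀ J : LieIdeal ℂ g, LieAlgebra.IsSimple ℂ J → ∃ k, I k = J)
    (π : Fin n → (g →ₗ[ℂ] g))
    (hmem : ∀ k x, π k x ∈ I k)
    (hsum : ∀ x : g, ∑ k, π k x = x)
    (hproj : ∀ k, ∀ x ∈ I k, π k x = x)
    (hzero : ∀ k l, k ≠ l → ∀ x ∈ I l, π k x = 0)
    (lam : Fin n → ℂ)
    (Blam : g → g → ℝ)
    (hB : ∀ X Y : g,
      Blam X Y = ∑ k, (lam k * killingForm ℂ (I k) ⟨π k X, hmem k X⟩ ⟨π k Y, hmem k Y⟩).im)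
    (Klam : g → g → ℂ)
    (hK : ∀ X Y : g,
      Klam X Y = ∑ k, lam k * killingForm ℂ (I k) ⟨π k X, hmem k X⟩ ⟨π k Y, hmem k Y⟩) :
    ((∀ q : Fin n → ℚ, (∀ k, 0 ≤ q k) → (∑ k, (q k : ℂ) * lam k) = 0 → ∀ k, q k = 0) →
      ∀ s : LieSubalgebra ℂ g, LieAlgebra.IsSemisimple ℂ s →
        (∀ x ∈ s, (∀ y ∈ s, Blam x y = 0) → x = 0) ∧
        (∀ x ∈ s, (∀ y ∈ s, Klam x y = 0) → x = 0)) ∧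
    (LinearIndependent ℚ lam →
      ∀ q : Fin n → ℚ, (∀ k, 0 ≤ q k) → (∑ k, (q k : ℂ) * lam k) = 0 → ∀ k, q k = 0) ∧
    ((∀ k, ∃ r : ℝ, 0 < r ∧ lam k = (r : ℂ)) →
      ∀ q : Fin n → ℚ, (∀ k, 0 ≤ q k) → (∑ k, (q k : ℂ) * lam k) = 0 → ∀ k, q k = 0) := by
  refine ⟨fun hlam s hs ↦ ?_, NonnegRatIndependent.of_linearIndependent, fun hpos ↦ ?_⟩
  · have hspecial := Blam_is_special_general I π hmem hsum hproj hzero hlam hB hK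
    exact ⟨hspecial.1 s hs, hspecial.2 s hs⟩
  · choose r hr hlr using hpos
    obtain rfl : lam = fun k ↦ (r k : ℂ) := funext hlr
    exact (NonnegRatIndependent.of_pos hr).map Complex.ofRealHom
end

section
/- Let g be a finite-dimensional complex reductive Lie algebra, X a semisimple element of g such that ad X has only real eigenvalues, l the centralizer of X in g, a the center of l and l^der the derived ideal of l. (i) The restriction to l of any nondegenerate, symmetric, g-invariant, ℝ-bilinear (resp. ℂ-bilinear) form B on g is nondegenerate, and so are its restrictions to l^der and to a. (ii) If B is a real (resp. complex) Manin form on g, then its restrictions to l, to l^der and to a are Manin forms. (iii) A symmetric g-invariant bilinear form on g is a Manin form if and only if its restrictions to the derived ideal g^der and to the center of g are Manin forms. -/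
open Module

namespace ManinPaper

variable (g : Type*) [LieRing g] [LieAlgebra ℝ g] [LieAlgebra ℂ g] [IsScalarTower ℝ ℂ g]
  [FiniteDimensional ℂ g] [FiniteDimensional ℝ g]

/-! ### Bilinear forms, signature, Manin forms -/

/-- Invariance of an `ℝ`-bilinear form. -/
def RInvariant (B : g →ₗ[ℝ] g →ₗ[ℝ] ℝ) : Prop :=
  ∀ Z X Y : g, B ⁅Z, X⁆ Y + B X ⁅Z, Y⁆ = 0

def RSymm (B : g →ₗ[ℝ] g →ₗ[ℝ] ℝ) : Prop := ∀ X Y : g, B X Y = B Y X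

def CInvariant (B : g →ₗ[ℂ] g →ₗ[ℂ] ℂ) : Prop :=
  ∀ Z X Y : g, B ⁅Z, X⁆ Y + B X ⁅Z, Y⁆ = 0

def CSymm (B : g →ₗ[ℂ] g →ₗ[ℂ] ℂ) : Prop := ∀ X Y : g, B X Y = B Y X

/-- Nondegeneracy of the restriction of a complex bilinear form to the subspace `W`. -/
def CNondegOn (B : g →ₗ[ℂ] g →ₗ[ℂ] ℂ) (W : Set g) : Prop :=
  ∀ x ∈ W, (∀ y ∈ W, B x y = 0) → x = 0

def RNondegOn (B : g →ₗ[ℝ] g →ₗ[ℝ] ℝ) (W : Set g) : Prop :=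
  ∀ x ∈ W, (∀ y ∈ W, B x y = 0) → x = 0

/-- The real symmetric bilinear form `B`, restricted to the real subspace `W`, has
signature `(p, q)`. -/
def SignatureOn (B : g →ₗ[ℝ] g →ₗ[ℝ] ℝ) (W : Submodule ℝ g) (p q : ℕ) : Prop :=
  ∃ P N : Submodule ℝ g, P ≤ W ∧ N ≤ W ∧ P ⊓ N = ⊥ ∧ P ⊔ N = W ∧
    finrank ℝ P = p ∧ finrank ℝ N = q ∧
    (∀ x ∈ P, x ≠ 0 → 0 < B x x) ∧ (∀ x ∈ N, x ≠ 0 → B x x < 0) ∧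
    (∀ x ∈ P, ∀ y ∈ N, B x y = 0)

/-- A real Manin form on `g`: symmetric, invariant, of signature
`(dim_ℂ g, dim_ℂ g)`. -/
def RealManinForm (B : g →ₗ[ℝ] g →ₗ[ℝ] ℝ) : Prop :=
  RSymm g B ∧ RInvariant g B ∧ SignatureOn g B ⊤ (finrank ℂ g) (finrank ℂ g)

/-- A complex Manin form on `g`: symmetric, invariant, nondegenerate. -/
def ComplexManinForm (B : g →ₗ[ℂ] g →ₗ[ℂ] ℂ) : Prop :=
  CSymm g B ∧ CInvariant g B ∧ CNondegOn g B Set.univ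

def RIsotropic (B : g →ₗ[ℝ] g →ₗ[ℝ] ℝ) (s : Set g) : Prop :=
  ∀ x ∈ s, ∀ y ∈ s, B x y = 0

def CIsotropic (B : g →ₗ[ℂ] g →ₗ[ℂ] ℂ) (s : Set g) : Prop :=
  ∀ x ∈ s, ∀ y ∈ s, B x y = 0

/-! ### Subalgebras of `g`, given as subspaces -/

def IsSub (V : Submodule ℂ g) : Prop := ∀ x ∈ V, ∀ y ∈ V, ⁅x, y⁆ ∈ V

def IsSubR (V : Submodule ℝ g) : Prop := ∀ x ∈ V, ∀ y ∈ V, ⁅x, y⁆ ∈ V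

/-- The span of all brackets. -/
def bracketSpan (V W : Submodule ℂ g) : Submodule ℂ g :=
  Submodule.span ℂ {z : g | ∃ x ∈ V, ∃ y ∈ W, ⁅x, y⁆ = z}

def bracketSpanR (V W : Submodule ℝ g) : Submodule ℝ g :=
  Submodule.span ℝ {z : g | ∃ x ∈ V, ∃ y ∈ W, ⁅x, y⁆ = z}

/-- Derived series of a subalgebra (given as a subspace). -/
def derivedSub (V : Submodule ℂ g) : ℕ → Submodule ℂ g
  | 0 => V
  | k + 1 => bracketSpan g (derivedSub V k) (derivedSub V k)

def derivedSubR (V : Submodule ℝ g) : ℕ → Submodule ℝ g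
  | 0 => V
  | k + 1 => bracketSpanR g (derivedSubR V k) (derivedSubR V k)

/-- Lower central series. -/
def lcsSub (V : Submodule ℂ g) : ℕ → Submodule ℂ g
  | 0 => V
  | k + 1 => bracketSpan g V (lcsSub V k)

def lcsSubR (V : Submodule ℝ g) : ℕ → Submodule ℝ g
  | 0 => V
  | k + 1 => bracketSpanR g V (lcsSubR V k)

def SolvableSub (V : Submodule ℂ g) : Prop := ∃ k, derivedSub g V k = ⊥

def SolvableSubR (V : Submodule ℝ g) : Prop := ∃ k, derivedSubR g V k = ⊥

def NilpotentSub (V : Submodule ℂ g) : Prop := ∃ k, lcsSub g V k = ⊥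

def NilpotentSubR (V : Submodule ℝ g) : Prop := ∃ k, lcsSubR g V k = ⊥

/-- `J` is an ideal of the subalgebra `V`. -/
def IsIdealIn (V J : Submodule ℂ g) : Prop :=
  J ≤ V ∧ ∀ x ∈ V, ∀ y ∈ J, ⁅x, y⁆ ∈ J

def IsIdealInR (V J : Submodule ℝ g) : Prop :=
  J ≤ V ∧ ∀ x ∈ V, ∀ y ∈ J, ⁅x, y⁆ ∈ J

/-- The radical (largest solvable ideal) of the subalgebra `V`. -/
def radicalIn (V : Submodule ℂ g) : Submodule ℂ g :=
  sSup {J : Submodule ℂ g | IsIdealIn g V J ∧ SolvableSub g J}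

def radicalInR (V : Submodule ℝ g) : Submodule ℝ g :=
  sSup {J : Submodule ℝ g | IsIdealInR g V J ∧ SolvableSubR g J}

/-- The nilpotent radical `[V,V] ⊓ rad V` of the subalgebra `V`; by Bourbaki, Ch. I §5.3,
this is the largest ideal of `V` whose elements act nilpotently in every finite-dimensional
representation of `V`. -/
def nilpotentRadIn (V : Submodule ℂ g) : Submodule ℂ g :=
  bracketSpan g V V ⊓ radicalIn g V

def nilpotentRadInR (V : Submodule ℝ g) : Submodule ℝ g :=
  bracketSpanR g V V ⊓ radicalInR g V

/-- The centre of the subalgebra `V`. -/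
def centerIn (V : Submodule ℂ g) : Submodule ℂ g where
  carrier := {z : g | z ∈ V ∧ ∀ y ∈ V, ⁅z, y⁆ = 0}
  zero_mem' := ⟨V.zero_mem, fun y _ => zero_lie y⟩
  add_mem' := by
    rintro a b ⟨ha, ha'⟩ ⟨hb, hb'⟩
    exact ⟨V.add_mem ha hb, fun y hy => by rw [add_lie, ha' y hy, hb' y hy, add_zero]⟩
  smul_mem' := by
    rintro c x ⟨hx, hx'⟩
    exact ⟨V.smul_mem c hx, fun y hy => by rw [smul_lie, hx' y hy, smul_zero]⟩

/-- The centralizer of a set. -/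
def centralizerOf (s : Set g) : Submodule ℂ g where
  carrier := {z : g | ∀ y ∈ s, ⁅z, y⁆ = 0}
  zero_mem' := fun y _ => zero_lie y
  add_mem' := by
    rintro a b ha hb
    exact fun y hy => by rw [add_lie, ha y hy, hb y hy, add_zero]
  smul_mem' := by
    rintro c x hx
    exact fun y hy => by rw [smul_lie, hx y hy, smul_zero]

/-- The derived (sub)algebra of `V`, as a subspace of `g`. -/
def derivedOf (V : Submodule ℂ g) : Submodule ℂ g := bracketSpan g V V

/-- A semisimple complex subalgebra: a subalgebra with trivial radical. -/
def SemisimpleSub (V : Submodule ℂ g) : Prop := IsSub g V ∧ radicalIn g V = ⊥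

/-- Borel subalgebras of the subalgebra `W`: maximal solvable subalgebras of `W`. -/
def IsBorelIn (W b : Submodule ℂ g) : Prop :=
  IsSub g b ∧ b ≤ W ∧ SolvableSub g b ∧
    ∀ b' : Submodule ℂ g, IsSub g b' → b' ≤ W → SolvableSub g b' → b ≤ b' → b' = b

/-- Parabolic subalgebras of `W`: subalgebras of `W` containing a Borel subalgebra of `W`. -/
def IsParabolicIn (W p : Submodule ℂ g) : Prop :=
  IsSub g p ∧ p ≤ W ∧ ∃ b : Submodule ℂ g, IsBorelIn g W b ∧ b ≤ p

/-- `l` is reductive in `W`: every `l`-invariant subspace of `W` admits an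
`l`-invariant complement in `W`. -/
def ReductiveIn (W l : Submodule ℂ g) : Prop :=
  ∀ U : Submodule ℂ g, U ≤ W → (∀ x ∈ l, ∀ u ∈ U, ⁅x, u⁆ ∈ U) →
    ∃ U' : Submodule ℂ g, U' ≤ W ∧ (∀ x ∈ l, ∀ u ∈ U', ⁅x, u⁆ ∈ U') ∧
      U ⊓ U' = ⊥ ∧ U ⊔ U' = W

/-- A Langlands decomposition `p = l ⊕ n` of the parabolic subalgebra `p` of `W`, where
`n` is the nilpotent radical of `p` and `l` is a subalgebra reductive in `W`. -/
def IsLanglandsIn (W p l : Submodule ℂ g) : Prop :=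
  IsSub g l ∧ l ≤ p ∧ ReductiveIn g W l ∧
    l ⊓ nilpotentRadIn g p = ⊥ ∧ l ⊔ nilpotentRadIn g p = p

/-- Cartan subalgebras of `W`: nilpotent and self-normalizing in `W`. -/
def IsCartanIn (W j : Submodule ℂ g) : Prop :=
  IsSub g j ∧ j ≤ W ∧ NilpotentSub g j ∧
    ∀ x ∈ W, (∀ y ∈ j, ⁅x, y⁆ ∈ j) → x ∈ j

def IsCartanInR (W j : Submodule ℝ g) : Prop :=
  IsSubR g j ∧ j ≤ W ∧ NilpotentSubR g j ∧
    ∀ x ∈ W, (∀ y ∈ j, ⁅x, y⁆ ∈ j) → x ∈ j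

/-- `g` is reductive: its radical coincides with its centre. -/
def IsReductive : Prop := radicalIn g ⊤ = centerIn g ⊤

/-- `b'` is the Borel subalgebra of `W` opposite to `b` relative to the Cartan
subalgebra `j`. -/
def IsOppositeBorelIn (W j b b' : Submodule ℂ g) : Prop :=
  IsBorelIn g W b' ∧ j ≤ b' ∧ b ⊓ b' = j

/-- The restriction of `B` to the reductive subalgebra `W` is a real Manin form. -/
def RealManinFormOn (B : g →ₗ[ℝ] g →ₗ[ℝ] ℝ) (W : Submodule ℂ g) : Prop :=
  (∀ x ∈ W, ∀ y ∈ W, B x y = B y x) ∧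
  (∀ z ∈ W, ∀ x ∈ W, ∀ y ∈ W, B ⁅z, x⁆ y + B x ⁅z, y⁆ = 0) ∧
  SignatureOn g B (W.restrictScalars ℝ) (finrank ℂ W) (finrank ℂ W)

/-- The restriction of `B` to the reductive subalgebra `W` is a complex Manin form. -/
def ComplexManinFormOn (B : g →ₗ[ℂ] g →ₗ[ℂ] ℂ) (W : Submodule ℂ g) : Prop :=
  (∀ x ∈ W, ∀ y ∈ W, B x y = B y x) ∧
  (∀ z ∈ W, ∀ x ∈ W, ∀ y ∈ W, B ⁅z, x⁆ y + B x ⁅z, y⁆ = 0) ∧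
  CNondegOn g B W

/-!
Let `l` be the centralizer of `X`. Since `ad X` is semisimple, `g = l ⊕ [X, g]`, and invariance
makes the sum orthogonal, so `B` is nondegenerate on `l`. Invariance also shows that the elements
of `l` orthogonal to `l^der` are exactly those of `a`; hence `l = l^der ⊕ a`, orthogonally, as soon
as `a ∩ l^der = 0`. An element `c` of that intersection acts nilpotently on `g` (Zassenhaus), so
it is orthogonal to `l` for the Killing form, and to `[X, g]` by invariance: it is central in `g`.
As `c ∈ [g, g]` is then `B`-orthogonal both to `[g, g]` and to the center, `c = 0`.

For real forms, `B(iu, iv) = -B(u, v)` as soon as `v ∈ [g, g]`, so multiplication by `i` forces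
neutral signature on every nondegenerate complex subspace of `[g, g]`, in particular on `[X, g]`
and `l^der`. By the law of inertia their orthogonal complements `l` in `g` and `a` in `l` inherit
neutrality from `g` and `l`.
-/

section OrthogonalSums

variable {k E K : Type*} [CommRing k] [AddCommGroup E] [Module k E] [Semiring K] [Module K E]
  {B : LinearMap.BilinForm k E}

/-- Nondegeneracy of `B` on a set. Taking a set rather than a subspace lets a real form be
tested on a complex subspace. -/
def NondegenerateOn (B : LinearMap.BilinForm k E) (s : Set E) : Prop :=
  ∀ x ∈ s, (∀ y ∈ s, B x y = 0) → x = 0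

/-- Orthogonality of two sets for `B`, with the first set on the left. -/
def OrthogonalOn (B : LinearMap.BilinForm k E) (s t : Set E) : Prop :=
  ∀ x ∈ s, ∀ y ∈ t, B x y = 0

theorem OrthogonalOn.symm (hB : B.IsSymm) {s t : Set E} (h : OrthogonalOn B s t) :
    OrthogonalOn B t s :=
  fun x hx y hy => (hB.eq x y).trans (h y hy x hx)

theorem NondegenerateOn.disjoint {U V : Submodule K E} (hU : NondegenerateOn B (U : Set E))
    (hVU : OrthogonalOn B (V : Set E) U) : Disjoint U V :=
  Submodule.disjoint_def.2 fun x hxU hxV => hU x hxU (hVU x hxV)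

theorem NondegenerateOn.of_sup_right {U V : Submodule K E}
    (h : NondegenerateOn B (U ⊔ V : Submodule K E)) (hVU : OrthogonalOn B (V : Set E) U) :
    NondegenerateOn B (V : Set E) := by
  refine fun x hx hxV => h x (Submodule.mem_sup_right hx) fun y hy => ?_
  obtain ⟨u, hu, v, hv, rfl⟩ := Submodule.mem_sup.1 hy
  rw [map_add, hVU x hx u hu, hxV v hv, add_zero]

theorem NondegenerateOn.sup {U V : Submodule K E} (hB : B.IsSymm)
    (hU : NondegenerateOn B (U : Set E)) (hV : NondegenerateOn B (V : Set E))
    (hUV : OrthogonalOn B (U : Set E) V) :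
    NondegenerateOn B (U ⊔ V : Submodule K E) := by
  intro x hx h
  obtain ⟨u, hu, v, hv, rfl⟩ := Submodule.mem_sup.1 hx
  have hu0 : u = 0 := hU u hu fun y hy => by
    simpa [hUV.symm hB v hv y hy] using h y (Submodule.mem_sup_left hy)
  have hv0 : v = 0 := hV v hv fun y hy => by
    simpa [hUV u hu y hy] using h y (Submodule.mem_sup_right hy)
  rw [hu0, hv0, add_zero]

end OrthogonalSums

theorem finrank_sup_of_disjoint {K F : Type*} [DivisionRing K] [AddCommGroup F] [Module K F]
    [FiniteDimensional K F] {U V : Submodule K F} (h : Disjoint U V) :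
    finrank K (U ⊔ V : Submodule K F) = finrank K U + finrank K V := by
  rw [← Submodule.finrank_sup_add_finrank_inf_eq, h.eq_bot, finrank_bot, add_zero]

section Signature

variable {k E : Type*} [Field k] [LinearOrder k] [AddCommGroup E] [Module k E]
  {B : LinearMap.BilinForm k E} {P Q N U V W : Submodule k E} {p q p' q' : ℕ}

/-- The form `B`, restricted to the subspace `W`, has signature `(p, q)`: this is `SignatureOn`
for a vector space over any ordered field. -/
def HasSignatureOn (B : LinearMap.BilinForm k E) (W : Submodule k E) (p q : ℕ) : Prop :=
  ∃ P N : Submodule k E, P ≤ W ∧ N ≤ W ∧ P ⊓ N = ⊥ ∧ P ⊔ N = W ∧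
    finrank k P = p ∧ finrank k N = q ∧
    (∀ x ∈ P, x ≠ 0 → 0 < B x x) ∧ (∀ x ∈ N, x ≠ 0 → B x x < 0) ∧
    (∀ x ∈ P, ∀ y ∈ N, B x y = 0)

theorem disjoint_of_pos_of_neg (hP : ∀ x ∈ P, x ≠ 0 → 0 < B x x)
    (hN : ∀ x ∈ N, x ≠ 0 → B x x < 0) : Disjoint P N :=
  Submodule.disjoint_def.2 fun x hxP hxN => by_contra fun hx => (hP x hxP hx).asymm (hN x hxN hx)

theorem nondegenerateOn_of_pos (hP : ∀ x ∈ P, x ≠ 0 → 0 < B x x) :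
    NondegenerateOn B (P : Set E) :=
  fun x hx h => by_contra fun hx0 => (hP x hx hx0).ne' (h x hx)

theorem nondegenerateOn_of_neg (hN : ∀ x ∈ N, x ≠ 0 → B x x < 0) :
    NondegenerateOn B (N : Set E) :=
  fun x hx h => by_contra fun hx0 => (hN x hx hx0).ne (h x hx)

theorem HasSignatureOn.nondegenerateOn (hB : B.IsSymm) (h : HasSignatureOn B W p q) :
    NondegenerateOn B (W : Set E) := by
  obtain ⟨P, N, -, -, -, rfl, -, -, hP, hN, hPN⟩ := h
  exact (nondegenerateOn_of_pos hP).sup hB (nondegenerateOn_of_neg hN) hPN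

/-- The restriction of `B` to `W` has as many positive as negative squares. -/
def IsNeutralOn (B : LinearMap.BilinForm k E) (W : Submodule k E) : Prop :=
  ∃ n, HasSignatureOn B W n n

theorem IsNeutralOn.nondegenerateOn (hB : B.IsSymm) (h : IsNeutralOn B W) :
    NondegenerateOn B (W : Set E) :=
  let ⟨_, hn⟩ := h
  hn.nondegenerateOn hB

theorem hasSignatureOn_of_pos (hP : ∀ x ∈ P, x ≠ 0 → 0 < B x x) :
    HasSignatureOn B P (finrank k P) 0 :=
  ⟨P, ⊥, le_rfl, bot_le, inf_bot_eq P, sup_bot_eq P, rfl, finrank_bot k E, hP, by simp, by simp⟩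

theorem hasSignatureOn_of_neg (hN : ∀ x ∈ N, x ≠ 0 → B x x < 0) :
    HasSignatureOn B N 0 (finrank k N) :=
  ⟨⊥, N, bot_le, le_rfl, bot_inf_eq N, bot_sup_eq N, finrank_bot k E, rfl, by simp, hN, by simp⟩

theorem HasSignatureOn.finrank_eq [FiniteDimensional k E] (h : HasSignatureOn B W p q) :
    finrank k W = p + q := by
  obtain ⟨P, N, -, -, hinf, rfl, rfl, rfl, -⟩ := h
  exact finrank_sup_of_disjoint (disjoint_iff.2 hinf)

theorem HasSignatureOn.le_left [FiniteDimensional k E] (h : HasSignatureOn B W p q)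
    (h' : HasSignatureOn B W p' q') : p ≤ p' := by
  have hfin := h'.finrank_eq
  obtain ⟨P, -, hPW, -, -, -, rfl, -, hP, -⟩ := h
  obtain ⟨-, N', -, hNW, -, -, -, rfl, -, hN, -⟩ := h'
  have := Submodule.finrank_mono (sup_le hPW hNW)
  rw [finrank_sup_of_disjoint (disjoint_of_pos_of_neg hP hN)] at this
  lia

theorem HasSignatureOn.unique [FiniteDimensional k E] (h : HasSignatureOn B W p q)
    (h' : HasSignatureOn B W p' q') : p = p' ∧ q = q' := by
  have hp := (h.le_left h').antisymm (h'.le_left h)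
  have hfin := h.finrank_eq.symm.trans h'.finrank_eq
  lia

variable [IsStrictOrderedRing k]

theorem pos_sup (hB : B.IsSymm) (hP : ∀ x ∈ P, x ≠ 0 → 0 < B x x)
    (hQ : ∀ x ∈ Q, x ≠ 0 → 0 < B x x) (hPQ : OrthogonalOn B (P : Set E) Q) :
    ∀ x ∈ P ⊔ Q, x ≠ 0 → 0 < B x x := by
  intro x hx hx0
  obtain ⟨a, ha, b, hb, rfl⟩ := Submodule.mem_sup.1 hx
  have hsum : B (a + b) (a + b) = B a a + B b b := by
    simp [hPQ a ha b hb, hPQ.symm hB b hb a ha]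
  rw [hsum]
  rcases eq_or_ne a 0 with rfl | ha0
  · simpa using hQ b hb (by simpa using hx0)
  rcases eq_or_ne b 0 with rfl | hb0
  · simpa using hP a ha ha0
  · exact add_pos (hP a ha ha0) (hQ b hb hb0)

theorem neg_sup (hB : B.IsSymm) (hP : ∀ x ∈ P, x ≠ 0 → B x x < 0)
    (hQ : ∀ x ∈ Q, x ≠ 0 → B x x < 0) (hPQ : OrthogonalOn B (P : Set E) Q) :
    ∀ x ∈ P ⊔ Q, x ≠ 0 → B x x < 0 := by
  simp only [← Left.neg_pos_iff, ← LinearMap.neg_apply] at hP hQ ⊢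
  exact pos_sup hB.neg hP hQ fun x hx y hy => by simp [hPQ x hx y hy]

theorem exists_hasSignatureOn_span_singleton {v : E} (hv : B v v ≠ 0) :
    ∃ p q, HasSignatureOn B (k ∙ v) p q := by
  have hself : ∀ c : k, B (c • v) (c • v) = c * c * B v v := fun c => by simp [mul_assoc]
  rcases hv.lt_or_gt with hneg | hpos
  · refine ⟨_, _, hasSignatureOn_of_neg fun x hx hx0 => ?_⟩
    obtain ⟨c, rfl⟩ := Submodule.mem_span_singleton.1 hx
    rw [hself]
    exact mul_neg_of_pos_of_neg (mul_self_pos.2 (left_ne_zero_of_smul hx0)) hneg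
  · refine ⟨_, _, hasSignatureOn_of_pos fun x hx hx0 => ?_⟩
    obtain ⟨c, rfl⟩ := Submodule.mem_span_singleton.1 hx
    rw [hself]
    exact mul_pos (mul_self_pos.2 (left_ne_zero_of_smul hx0)) hpos

theorem HasSignatureOn.map_of_antiIsometry (hB : B.IsSymm) {J : E →ₗ[k] E}
    (hJ : Function.Injective J) (hBJ : ∀ x ∈ W, ∀ y ∈ W, B (J x) (J y) = -B x y)
    (h : HasSignatureOn B W p q) :
    HasSignatureOn B (W.map J) q p := by
  obtain ⟨P, N, hPW, hNW, hinf, rfl, rfl, rfl, hP, hN, hPN⟩ := h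
  refine ⟨N.map J, P.map J, Submodule.map_mono hNW, Submodule.map_mono hPW, ?_, ?_,
    ((Submodule.equivMapOfInjective J hJ N).finrank_eq).symm,
    ((Submodule.equivMapOfInjective J hJ P).finrank_eq).symm, ?_, ?_, ?_⟩
  · rw [← Submodule.map_inf J hJ, inf_comm, hinf, Submodule.map_bot]
  · rw [← Submodule.map_sup, sup_comm]
  · rintro _ ⟨x, hx, rfl⟩ hx0
    rw [hBJ x (hNW hx) x (hNW hx)]
    exact neg_pos.2 (hN x hx fun h => hx0 (by rw [h, map_zero]))
  · rintro _ ⟨x, hx, rfl⟩ hx0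
    rw [hBJ x (hPW hx) x (hPW hx)]
    exact neg_neg_of_pos (hP x hx fun h => hx0 (by rw [h, map_zero]))
  · rintro _ ⟨x, hx, rfl⟩ _ ⟨y, hy, rfl⟩
    rw [hBJ x (hNW hx) y (hPW hy), hB.eq, hPN y hy x hx, neg_zero]

variable [FiniteDimensional k E]

theorem HasSignatureOn.sup (hB : B.IsSymm) (hU : HasSignatureOn B U p q)
    (hV : HasSignatureOn B V p' q') (hUV : OrthogonalOn B (U : Set E) V) :
    HasSignatureOn B (U ⊔ V) (p + p') (q + q') := by
  obtain ⟨P, N, hPU, hNU, -, rfl, rfl, rfl, hP, hN, hPN⟩ := hU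
  obtain ⟨P', N', hPV, hNV, -, rfl, rfl, rfl, hP', hN', hPN'⟩ := hV
  have hPP' : OrthogonalOn B (P : Set E) P' := fun x hx y hy => hUV x (hPU hx) y (hPV hy)
  have hNN' : OrthogonalOn B (N : Set E) N' := fun x hx y hy => hUV x (hNU hx) y (hNV hy)
  have hpos := pos_sup hB hP hP' hPP'
  have hneg := neg_sup hB hN hN' hNN'
  refine ⟨P ⊔ P', N ⊔ N', sup_le_sup hPU hPV, sup_le_sup hNU hNV,
    (disjoint_of_pos_of_neg hpos hneg).eq_bot, sup_sup_sup_comm P P' N N',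
    finrank_sup_of_disjoint ((nondegenerateOn_of_pos hP).disjoint (hPP'.symm hB)),
    finrank_sup_of_disjoint ((nondegenerateOn_of_neg hN).disjoint (hNN'.symm hB)),
    hpos, hneg, fun x hx y hy => ?_⟩
  obtain ⟨a, ha, a', ha', rfl⟩ := Submodule.mem_sup.1 hx
  obtain ⟨b, hb, b', hb', rfl⟩ := Submodule.mem_sup.1 hy
  simp [hPN a ha b hb, hPN' a' ha' b' hb', hUV a (hPU ha) b' (hNV hb'),
    hUV.symm hB a' (hPV ha') b (hNU hb)]

theorem exists_hasSignatureOn_span_image (hB : B.IsSymm) {ι : Type*} {v : ι → E}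
    (hortho : Pairwise fun i j => B (v i) (v j) = 0) (hv : ∀ i, B (v i) (v i) ≠ 0)
    (s : Finset ι) : ∃ p q, HasSignatureOn B (Submodule.span k (v '' s)) p q := by
  induction s using Finset.cons_induction with
  | empty => exact ⟨_, _, hasSignatureOn_of_pos (by simp)⟩
  | cons i s hi ih =>
    obtain ⟨p, q, hs⟩ := ih
    obtain ⟨p', q', hvi⟩ := exists_hasSignatureOn_span_singleton (hv i)
    rw [Finset.coe_cons, Set.image_insert_eq, Submodule.span_insert]
    refine ⟨_, _, hvi.sup hB hs fun x hx y hy => ?_⟩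
    obtain ⟨c, rfl⟩ := Submodule.mem_span_singleton.1 hx
    have hle : Submodule.span k (v '' s) ≤ LinearMap.ker (B (v i)) :=
      Submodule.span_le.2 <| by
        rintro _ ⟨j, hj, rfl⟩
        exact hortho (ne_of_mem_of_not_mem hj hi).symm
    simp [LinearMap.mem_ker.1 (hle hy)]

theorem exists_hasSignatureOn (hB : B.IsSymm) (hW : NondegenerateOn B (W : Set E)) :
    ∃ p q, HasSignatureOn B W p q := by
  have hsep : (B.restrict W).SeparatingLeft := fun x hx =>
    Subtype.ext (hW x x.2 fun y hy => hx ⟨y, hy⟩)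
  obtain ⟨b, hb⟩ := LinearMap.BilinForm.exists_orthogonal_basis (B := B.restrict W)
    ⟨fun x y => hB.eq x y⟩
  have hspan : Submodule.span k (Set.range fun i => (b i : E)) = W := by
    rw [Set.range_comp' Subtype.val, ← Submodule.coe_subtype, Submodule.span_image, b.span_eq,
      Submodule.map_top, Submodule.range_subtype]
  have hsig := exists_hasSignatureOn_span_image hB (v := fun i => (b i : E))
    (fun i j hij => hb hij) (hb.not_isOrtho_basis_self_of_separatingLeft hsep) Finset.univ
  rwa [Finset.coe_univ, Set.image_univ, hspan] at hsig

theorem IsNeutralOn.sup (hB : B.IsSymm) (hU : IsNeutralOn B U) (hV : IsNeutralOn B V)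
    (hUV : OrthogonalOn B (U : Set E) V) : IsNeutralOn B (U ⊔ V) :=
  let ⟨_, hm⟩ := hU
  let ⟨_, hn⟩ := hV
  ⟨_, hm.sup hB hn hUV⟩

theorem IsNeutralOn.of_sup_right (hB : B.IsSymm) (h : IsNeutralOn B (U ⊔ V))
    (hU : IsNeutralOn B U) (hUV : OrthogonalOn B (U : Set E) V) : IsNeutralOn B V := by
  obtain ⟨p, q, hpq⟩ :=
    exists_hasSignatureOn hB ((h.nondegenerateOn hB).of_sup_right (hUV.symm hB))
  obtain ⟨m, hm⟩ := h
  obtain ⟨n, hn⟩ := hU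
  obtain ⟨hp, hq⟩ := (hn.sup hB hpq hUV).unique hm
  obtain rfl : p = q := by lia
  exact ⟨p, hpq⟩

theorem IsNeutralOn.of_antiIsometry (hB : B.IsSymm) (hW : NondegenerateOn B (W : Set E))
    {J : E →ₗ[k] E} (hJ : Function.Injective J) (hJW : W.map J ≤ W)
    (hBJ : ∀ x ∈ W, ∀ y ∈ W, B (J x) (J y) = -B x y) : IsNeutralOn B W := by
  obtain ⟨p, q, hpq⟩ := exists_hasSignatureOn hB hW
  have hmap : W.map J = W := Submodule.eq_of_le_of_finrank_eq hJW
    (Submodule.equivMapOfInjective J hJ W).finrank_eq.symm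
  have hqp := hpq.map_of_antiIsometry hB hJ hBJ
  rw [hmap] at hqp
  obtain rfl := (hpq.unique hqp).1
  exact ⟨p, hpq⟩

end Signature

theorem ker_sup_range_eq_top_of_isSemisimple {R M : Type*} [CommRing R] [AddCommGroup M]
    [Module R M] {f : Module.End R M} (hf : f.IsSemisimple) :
    LinearMap.ker f ⊔ LinearMap.range f = ⊤ := by
  obtain ⟨C, hC, hcompl⟩ := Module.End.isSemisimple_iff.1 hf (LinearMap.range f)
    fun x _ => LinearMap.mem_range_self f x
  have hCker : C ≤ LinearMap.ker f := fun x hx =>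
    Submodule.disjoint_def.1 hcompl.disjoint (f x) (LinearMap.mem_range_self f x) (hC hx)
  exact top_le_iff.1 (hcompl.symm.sup_eq_top.ge.trans (sup_le_sup_right hCker _))

section KillingForm

variable (K L : Type*) [Field K] [LieRing L] [LieAlgebra K L]

theorem center_le_ker_killingForm :
    (LieAlgebra.center K L).toSubmodule ≤ LinearMap.ker (killingForm K L) := fun z hz => by
  have hz0 : LieAlgebra.ad K L z = 0 := LinearMap.ext fun y => by
    rw [LieAlgebra.ad_apply, ← lie_skew, (LieModule.mem_maxTrivSubmodule K L L z).1 hz y, neg_zero,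
      LinearMap.zero_apply]
  ext y
  simp [killingForm_apply_apply, hz0]

variable [CharZero K] [FiniteDimensional K L]

theorem isSolvable_killingCompl_derived :
    LieAlgebra.IsSolvable (LieIdeal.killingCompl K L ⁅(⊤ : LieIdeal K L), (⊤ : LieIdeal K L)⁆) := by
  refine LieIdeal.isSolvable_of_killingForm_apply_lie_eq_zero _ fun x hx y hy => ?_
  rw [LieModule.traceForm_comm]
  exact (LieIdeal.mem_killingCompl K L _).1 hx y (LieSubmodule.mono_lie le_top le_top hy)

variable [LieAlgebra.HasCentralRadical K L]

theorem killingCompl_derived_le_center :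
    LieIdeal.killingCompl K L ⁅(⊤ : LieIdeal K L), (⊤ : LieIdeal K L)⁆ ≤ LieAlgebra.center K L := by
  rw [← LieAlgebra.HasCentralRadical.radical_eq_center (R := K),
    ← LieAlgebra.LieIdeal.solvable_iff_le_radical]
  exact isSolvable_killingCompl_derived K L

theorem ker_killingForm_le_center :
    LinearMap.ker (killingForm K L) ≤ (LieAlgebra.center K L).toSubmodule := fun x hx =>
  killingCompl_derived_le_center K L <| (LieIdeal.mem_killingCompl K L _).2 fun y _ => by
    rw [LieModule.traceForm_comm, LinearMap.mem_ker.1 hx, LinearMap.zero_apply]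

theorem center_sup_derived_eq_top :
    (LieAlgebra.center K L).toSubmodule ⊔ ⁅(⊤ : LieIdeal K L), (⊤ : LieIdeal K L)⁆.toSubmodule
      = ⊤ := by
  set Z := (LieAlgebra.center K L).toSubmodule
  set D := ⁅(⊤ : LieIdeal K L), (⊤ : LieIdeal K L)⁆.toSubmodule with hD
  set κ := killingForm K L
  have hZ : Z ≤ LinearMap.ker κ := center_le_ker_killingForm K L
  have hperp : κ.orthogonal D ≤ Z := by
    rw [hD, ← LieIdeal.toSubmodule_killingCompl]
    exact killingCompl_derived_le_center K L
  have hsup := Submodule.finrank_sup_add_finrank_inf_eq Z D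
  have horth := LinearMap.BilinForm.finrank_add_finrank_orthogonal' (B := κ) D
  have hinf := Submodule.finrank_mono (inf_comm Z D ▸ inf_le_inf_left D hZ)
  have hle := Submodule.finrank_mono hperp
  have htop := Submodule.finrank_le (Z ⊔ D)
  exact Submodule.eq_top_of_finrank_eq (by lia)

end KillingForm

section Zassenhaus

variable {K M : Type*} [Field K] [AddCommGroup M] [Module K M] [FiniteDimensional K M]

theorem trace_restrict_maxGenEigenspace (f : Module.End K M) (μ : K) :
    LinearMap.trace K (f.maxGenEigenspace μ)
      (f.restrict (f.mapsTo_maxGenEigenspace_of_comm (Commute.refl f) μ)) =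
        finrank K (f.maxGenEigenspace μ) * μ := by
  have h := (LinearMap.isNilpotent_trace_of_isNilpotent
    (f.isNilpotent_restrict_maxGenEigenspace_sub_algebraMap μ)).eq_zero
  have hμ : LinearMap.trace K _ (algebraMap K (Module.End K (f.maxGenEigenspace μ)) μ) =
      finrank K (f.maxGenEigenspace μ) * μ := by
    rw [Algebra.algebraMap_eq_smul_one, map_smul, LinearMap.trace_one, smul_eq_mul, mul_comm]
  rw [← hμ, ← sub_eq_zero, ← map_sub]
  exact h

theorem isNilpotent_of_maxGenEigenspace_zero_eq_top {f : Module.End K M}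
    (hf : f.maxGenEigenspace 0 = ⊤) : IsNilpotent f := by
  refine ⟨finrank K M, LinearMap.ext fun m => ?_⟩
  have hm : m ∈ f.maxGenEigenspace 0 := hf ▸ Submodule.mem_top
  rwa [Module.End.maxGenEigenspace_eq_genEigenspace_finrank, Module.End.mem_genEigenspace_nat,
    zero_smul, sub_zero] at hm

variable {L : Type*} [IsAlgClosed K] [CharZero K] [LieRing L] [LieAlgebra K L]
  [LieRingModule L M] [LieModule K L M]

-- A central element has trace zero on each of its generalised eigenspaces, because these are
-- `L`-submodules and the element is a sum of brackets; so zero is its only eigenvalue.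
theorem isNilpotent_toEnd_of_mem_center_of_mem_lcs {c : L} (hc : c ∈ LieAlgebra.center K L)
    (hc' : c ∈ LieModule.lowerCentralSeries K L L 1) : IsNilpotent (LieModule.toEnd K L M c) := by
  set f := LieModule.toEnd K L M c
  have hbot : ∀ μ : K, μ ≠ 0 → f.maxGenEigenspace μ = ⊥ := by
    intro μ hμ
    let N : LieSubmodule K L M :=
      { f.maxGenEigenspace μ with
        lie_mem := fun {v m} hm => f.mapsTo_maxGenEigenspace_of_comm
          (LieModule.commute_toEnd_of_mem_center_left M hc v) μ hm }
    have htrace : LinearMap.trace K N (LieModule.toEnd K L N c) = 0 :=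
      LieModule.trace_toEnd_eq_zero_of_mem_lcs K L N le_rfl hc'
    have hmul := (trace_restrict_maxGenEigenspace f μ).symm.trans htrace
    exact Submodule.finrank_eq_zero.1 (by simpa [hμ] using hmul)
  refine isNilpotent_of_maxGenEigenspace_zero_eq_top (top_le_iff.1 ?_)
  rw [← Module.End.iSup_maxGenEigenspace_eq_top f]
  refine iSup_le fun μ => ?_
  rcases eq_or_ne μ 0 with rfl | hμ
  · exact le_rfl
  · exact (hbot μ hμ).trans_le bot_le

theorem traceForm_eq_zero_of_mem_center_of_mem_lcs {c : L} (hc : c ∈ LieAlgebra.center K L)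
    (hc' : c ∈ LieModule.lowerCentralSeries K L L 1) (y : L) :
    LieModule.traceForm K L M c y = 0 :=
  (LinearMap.isNilpotent_trace_of_isNilpotent
    ((LieModule.commute_toEnd_of_mem_center_left M hc y).isNilpotent_mul_right
      (isNilpotent_toEnd_of_mem_center_of_mem_lcs hc hc'))).eq_zero

end Zassenhaus

section Subspaces

variable {𝔤 : Type*} [LieRing 𝔤] [LieAlgebra ℂ 𝔤] {V W : Submodule ℂ 𝔤} {X : 𝔤}

theorem isSub_top : IsSub 𝔤 ⊤ := fun _ _ _ _ => Submodule.mem_top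

theorem isSub_centralizerOf (s : Set 𝔤) : IsSub 𝔤 (centralizerOf 𝔤 s) := fun x hx y hy z hz => by
  rw [lie_lie, hy z hz, hx z hz, lie_zero, lie_zero, sub_zero]

theorem centerIn_le (V : Submodule ℂ 𝔤) : centerIn 𝔤 V ≤ V := fun _ hx => hx.1

theorem lie_mem_derivedOf {x y : 𝔤} (hx : x ∈ V) (hy : y ∈ V) : ⁅x, y⁆ ∈ derivedOf 𝔤 V :=
  Submodule.subset_span ⟨x, hx, y, hy, rfl⟩

theorem derivedOf_le_iff : derivedOf 𝔤 V ≤ W ↔ ∀ x ∈ V, ∀ y ∈ V, ⁅x, y⁆ ∈ W :=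
  ⟨fun h _ hx _ hy => h (lie_mem_derivedOf hx hy), fun h => Submodule.span_le.2 <| by
    rintro _ ⟨x, hx, y, hy, rfl⟩
    exact h x hx y hy⟩

theorem IsSub.derivedOf_le (hV : IsSub 𝔤 V) : derivedOf 𝔤 V ≤ V := derivedOf_le_iff.2 hV

theorem derivedOf_mono (h : V ≤ W) : derivedOf 𝔤 V ≤ derivedOf 𝔤 W :=
  derivedOf_le_iff.2 fun _ hx _ hy => lie_mem_derivedOf (h hx) (h hy)

-- Since `c • ⁅x, y⁆ = ⁅c • x, y⁆`, the complex span of the brackets is their additive span.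
theorem derivedOf_induction {p : (x : 𝔤) → x ∈ derivedOf 𝔤 V → Prop} (zero : p 0 (zero_mem _))
    (add : ∀ x y hx hy, p x hx → p y hy → p (x + y) (add_mem hx hy))
    (lie : ∀ x (hx : x ∈ V) y (hy : y ∈ V), p ⁅x, y⁆ (lie_mem_derivedOf hx hy)) {x : 𝔤}
    (hx : x ∈ derivedOf 𝔤 V) : p x hx := by
  refine Submodule.closure_induction (p := p) zero add ?_ hx
  rintro c _ ⟨x, hx, y, hy, rfl⟩
  simp only [← smul_lie]
  exact lie _ (V.smul_mem c hx) y hy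

theorem centerIn_top : centerIn 𝔤 ⊤ = (LieAlgebra.center ℂ 𝔤).toSubmodule := by
  ext x
  rw [LieSubmodule.mem_toSubmodule, LieModule.mem_maxTrivSubmodule]
  refine ⟨fun h y => ?_, fun h => ⟨Submodule.mem_top, fun y _ => ?_⟩⟩
  · rw [← lie_skew, h.2 y Submodule.mem_top, neg_zero]
  · rw [← lie_skew, h y, neg_zero]

theorem derivedOf_top :
    derivedOf 𝔤 ⊤ = ⁅(⊤ : LieIdeal ℂ 𝔤), (⊤ : LieIdeal ℂ 𝔤)⁆.toSubmodule := by
  rw [LieSubmodule.lieIdeal_oper_eq_linear_span']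
  rfl

theorem derivedSub_toSubmodule (I : LieIdeal ℂ 𝔤) (n : ℕ) :
    derivedSub 𝔤 I.toSubmodule n = (LieAlgebra.derivedSeriesOfIdeal ℂ 𝔤 n I).toSubmodule := by
  induction n with
  | zero => rfl
  | succ n ih =>
    rw [LieAlgebra.derivedSeriesOfIdeal_succ, LieSubmodule.lieIdeal_oper_eq_linear_span']
    simp only [derivedSub, ih]
    rfl

theorem centralizerOf_singleton (X : 𝔤) :
    centralizerOf 𝔤 {X} = LinearMap.ker (LieAlgebra.ad ℂ 𝔤 X) := by
  ext y
  rw [LinearMap.mem_ker, LieAlgebra.ad_apply, ← lie_skew, neg_eq_zero]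
  exact forall_eq

theorem centralizerOf_sup_range_ad (hX : (LieAlgebra.ad ℂ 𝔤 X).IsSemisimple) :
    centralizerOf 𝔤 {X} ⊔ LinearMap.range (LieAlgebra.ad ℂ 𝔤 X) = ⊤ := by
  rw [centralizerOf_singleton, ker_sup_range_eq_top_of_isSemisimple hX]

theorem range_ad_le_derivedOf (X : 𝔤) :
    LinearMap.range (LieAlgebra.ad ℂ 𝔤 X) ≤ derivedOf 𝔤 ⊤ := by
  rintro _ ⟨y, rfl⟩
  exact lie_mem_derivedOf Submodule.mem_top Submodule.mem_top

variable [FiniteDimensional ℂ 𝔤]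

theorem IsReductive.hasCentralRadical (hred : IsReductive 𝔤) :
    LieAlgebra.HasCentralRadical ℂ 𝔤 := by
  refine LieAlgebra.hasCentralRadical_of_radical_le ℂ 𝔤 ?_
  obtain ⟨n, hn⟩ := LieAlgebra.IsSolvable.solvable ℂ (LieAlgebra.radical ℂ 𝔤)
  have hsolv : SolvableSub 𝔤 (LieAlgebra.radical ℂ 𝔤).toSubmodule :=
    ⟨n, by rw [derivedSub_toSubmodule, LieIdeal.derivedSeries_eq_bot_iff _ _ |>.1 hn]; rfl⟩
  have hle : (LieAlgebra.radical ℂ 𝔤).toSubmodule ≤ radicalIn 𝔤 ⊤ :=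
    le_sSup ⟨⟨le_top, fun x _ _ hy => (LieAlgebra.radical ℂ 𝔤).lie_mem hy⟩, hsolv⟩
  rwa [hred, centerIn_top] at hle

theorem IsReductive.centerIn_sup_derivedOf_top (hred : IsReductive 𝔤) :
    centerIn 𝔤 ⊤ ⊔ derivedOf 𝔤 ⊤ = ⊤ := by
  have := hred.hasCentralRadical
  rw [centerIn_top, derivedOf_top, center_sup_derived_eq_top]

theorem IsSub.killingForm_eq_zero_of_mem_centerIn_of_mem_derivedOf (hV : IsSub 𝔤 V) {c y : 𝔤}
    (hc : c ∈ centerIn 𝔤 V) (hc' : c ∈ derivedOf 𝔤 V) (hy : y ∈ V) : killingForm ℂ 𝔤 c y = 0 := by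
  let L : LieSubalgebra ℂ 𝔤 := { V with lie_mem' := fun ha hb => hV _ ha _ hb }
  have hle : derivedOf 𝔤 V ≤
      (LieModule.lowerCentralSeries ℂ L L 1).toSubmodule.map L.toSubmodule.subtype :=
    derivedOf_le_iff.2 fun a ha b hb => ⟨⁅(⟨a, ha⟩ : L), (⟨b, hb⟩ : L)⁆,
      LieSubmodule.lie_mem_lie (LieSubmodule.mem_top (R := ℂ) (L := L) _)
        (LieSubmodule.mem_top (R := ℂ) (L := L) _), rfl⟩
  obtain ⟨(c : L), hcL, rfl⟩ := hle hc'
  have hcenter : c ∈ LieAlgebra.center ℂ L := fun v => Subtype.ext <| by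
    rw [LieSubalgebra.coe_bracket, ← lie_skew]
    exact neg_eq_zero.2 (hc.2 v v.2)
  exact traceForm_eq_zero_of_mem_center_of_mem_lcs (M := 𝔤) hcenter hcL ⟨y, hy⟩

theorem IsReductive.centerIn_inf_derivedOf_centralizerOf_le (hred : IsReductive 𝔤)
    (hX : (LieAlgebra.ad ℂ 𝔤 X).IsSemisimple) :
    centerIn 𝔤 (centralizerOf 𝔤 {X}) ⊓ derivedOf 𝔤 (centralizerOf 𝔤 {X}) ≤ centerIn 𝔤 ⊤ := by
  rintro c ⟨hc, hc'⟩
  have hrange : LinearMap.range (LieAlgebra.ad ℂ 𝔤 X) ≤ LinearMap.ker (killingForm ℂ 𝔤 c) := by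
    rintro _ ⟨y, rfl⟩
    rw [LinearMap.mem_ker, LieAlgebra.ad_apply, ← LieModule.traceForm_apply_lie_apply,
      hc.1 X rfl, map_zero, LinearMap.zero_apply]
  have hcentralizer : centralizerOf 𝔤 {X} ≤ LinearMap.ker (killingForm ℂ 𝔤 c) := fun y hy =>
    (isSub_centralizerOf {X}).killingForm_eq_zero_of_mem_centerIn_of_mem_derivedOf hc hc' hy
  have htop := (centralizerOf_sup_range_ad hX).ge.trans (sup_le hcentralizer hrange)
  have := hred.hasCentralRadical
  rw [centerIn_top]
  exact ker_killingForm_le_center ℂ 𝔤 (LinearMap.ker_eq_top.1 (top_le_iff.1 htop))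

end Subspaces

section InvariantForms

theorem lie_apply_of_lieInvariant {R L : Type*} [CommRing R] [LieRing L] [Module R L]
    {B : LinearMap.BilinForm R L} (hB : B.lieInvariant L) (x y z : L) :
    B ⁅x, y⁆ z = B x ⁅y, z⁆ := by
  rw [← lie_skew, map_neg, LinearMap.neg_apply, hB, neg_neg]

variable {k 𝔤 : Type*} [Field k] [LieRing 𝔤] [LieAlgebra ℂ 𝔤] [Module k 𝔤]
  {B : LinearMap.BilinForm k 𝔤} {V : Submodule ℂ 𝔤} {X : 𝔤}

theorem orthogonalOn_centerIn_derivedOf (hB : B.lieInvariant 𝔤) (V : Submodule ℂ 𝔤) :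
    OrthogonalOn B (centerIn 𝔤 V : Set 𝔤) (derivedOf 𝔤 V) := fun x hx y hy => by
  induction hy using derivedOf_induction with
  | zero => exact map_zero _
  | add y z _ _ hy hz => rw [map_add, hy, hz, add_zero]
  | lie y hy z hz => rw [← lie_apply_of_lieInvariant hB, hx.2 y hy, map_zero, LinearMap.zero_apply]

theorem orthogonalOn_centralizerOf_range_ad (hB : B.lieInvariant 𝔤) (X : 𝔤) :
    OrthogonalOn B (centralizerOf 𝔤 {X} : Set 𝔤) (LinearMap.range (LieAlgebra.ad ℂ 𝔤 X)) := by
  rintro x hx _ ⟨y, rfl⟩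
  rw [LieAlgebra.ad_apply, ← lie_apply_of_lieInvariant hB, hx X rfl, map_zero,
    LinearMap.zero_apply]

theorem apply_smul_of_mem_derivedOf (hB : B.lieInvariant 𝔤) (c : ℂ) (u : 𝔤) {v : 𝔤}
    (hv : v ∈ derivedOf 𝔤 ⊤) : B (c • u) v = B u (c • v) := by
  induction hv using derivedOf_induction with
  | zero => simp
  | add v w _ _ hv hw => rw [map_add, smul_add, map_add, hv, hw]
  | lie y _ z _ =>
    rw [← lie_apply_of_lieInvariant hB, smul_lie, ← lie_smul, lie_apply_of_lieInvariant hB,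
      smul_lie]

theorem nondegenerateOn_centralizerOf (hB : B.lieInvariant 𝔤)
    (hnd : NondegenerateOn B Set.univ) (hX : (LieAlgebra.ad ℂ 𝔤 X).IsSemisimple) :
    NondegenerateOn B (centralizerOf 𝔤 {X} : Set 𝔤) := by
  rw [← Submodule.top_coe (R := ℂ), ← centralizerOf_sup_range_ad hX, sup_comm] at hnd
  exact hnd.of_sup_right (orthogonalOn_centralizerOf_range_ad hB X)

theorem nondegenerateOn_range_ad (hS : B.IsSymm) (hB : B.lieInvariant 𝔤)
    (hnd : NondegenerateOn B Set.univ) (hX : (LieAlgebra.ad ℂ 𝔤 X).IsSemisimple) :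
    NondegenerateOn B (LinearMap.range (LieAlgebra.ad ℂ 𝔤 X) : Set 𝔤) := by
  rw [← Submodule.top_coe (R := ℂ), ← centralizerOf_sup_range_ad hX] at hnd
  exact hnd.of_sup_right ((orthogonalOn_centralizerOf_range_ad hB X).symm hS)

theorem mem_centerIn_of_orthogonal_derivedOf (hB : B.lieInvariant 𝔤) (hV : IsSub 𝔤 V)
    (hnd : NondegenerateOn B (V : Set 𝔤)) {x : 𝔤} (hx : x ∈ V)
    (hortho : ∀ y ∈ derivedOf 𝔤 V, B x y = 0) : x ∈ centerIn 𝔤 V :=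
  ⟨hx, fun y hy => hnd _ (hV x hx y hy) fun z hz => by
    rw [lie_apply_of_lieInvariant hB, hortho _ (lie_mem_derivedOf hy hz)]⟩

theorem nondegenerateOn_derivedOf (hB : B.lieInvariant 𝔤) (hV : IsSub 𝔤 V)
    (hnd : NondegenerateOn B (V : Set 𝔤)) (hdisj : Disjoint (centerIn 𝔤 V) (derivedOf 𝔤 V)) :
    NondegenerateOn B (derivedOf 𝔤 V : Set 𝔤) := fun x hx hortho =>
  Submodule.disjoint_def.1 hdisj x
    (mem_centerIn_of_orthogonal_derivedOf hB hV hnd (hV.derivedOf_le hx) hortho) hx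

theorem disjoint_centerIn_derivedOf_top (hS : B.IsSymm) (hB : B.lieInvariant 𝔤)
    (hnd : NondegenerateOn B Set.univ) (htop : centerIn 𝔤 ⊤ ⊔ derivedOf 𝔤 ⊤ = ⊤) :
    Disjoint (centerIn 𝔤 ⊤) (derivedOf 𝔤 ⊤) := by
  have hortho := orthogonalOn_centerIn_derivedOf hB ⊤
  rw [← Submodule.top_coe (R := ℂ), ← htop, sup_comm] at hnd
  exact (hnd.of_sup_right hortho).disjoint (hortho.symm hS)

theorem IsReductive.disjoint_centerIn_derivedOf_centralizerOf [FiniteDimensional ℂ 𝔤]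
    (hred : IsReductive 𝔤) (hS : B.IsSymm) (hB : B.lieInvariant 𝔤)
    (hnd : NondegenerateOn B Set.univ) (hX : (LieAlgebra.ad ℂ 𝔤 X).IsSemisimple) :
    Disjoint (centerIn 𝔤 (centralizerOf 𝔤 {X})) (derivedOf 𝔤 (centralizerOf 𝔤 {X})) :=
  Submodule.disjoint_def.2 fun c hc hc' =>
    Submodule.disjoint_def.1
      (disjoint_centerIn_derivedOf_top hS hB hnd hred.centerIn_sup_derivedOf_top) c
      (hred.centerIn_inf_derivedOf_centralizerOf_le hX ⟨hc, hc'⟩) (derivedOf_mono le_top hc')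

variable [SMul k ℂ] [IsScalarTower k ℂ 𝔤] [FiniteDimensional k 𝔤]

theorem derivedOf_sup_centerIn (hS : B.IsSymm) (hB : B.lieInvariant 𝔤) (hV : IsSub 𝔤 V)
    (hnd : NondegenerateOn B (V : Set 𝔤)) (hdisj : Disjoint (centerIn 𝔤 V) (derivedOf 𝔤 V)) :
    derivedOf 𝔤 V ⊔ centerIn 𝔤 V = V := by
  refine le_antisymm (sup_le hV.derivedOf_le (centerIn_le V)) fun x hx => ?_
  set D := (derivedOf 𝔤 V).restrictScalars k
  have hD : Disjoint D (B.orthogonal D) := Submodule.disjoint_def.2 fun y hy hy' =>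
    nondegenerateOn_derivedOf hB hV hnd hdisj y hy fun z hz => (hS.eq y z).trans (hy' z hz)
  have hcompl := (LinearMap.BilinForm.isCompl_orthogonal_iff_disjoint hS.isRefl).2 hD
  obtain ⟨d, hd, e, he, rfl⟩ :=
    Submodule.mem_sup.1 (hcompl.sup_eq_top.ge (Submodule.mem_top (x := x)))
  have heV : e ∈ V := (Submodule.add_mem_iff_right V (hV.derivedOf_le hd)).1 hx
  exact Submodule.add_mem_sup hd (mem_centerIn_of_orthogonal_derivedOf hB hV hnd heV
    fun y hy => (hS.eq e y).trans (he y hy))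

theorem nondegenerateOn_centerIn (hS : B.IsSymm) (hB : B.lieInvariant 𝔤) (hV : IsSub 𝔤 V)
    (hnd : NondegenerateOn B (V : Set 𝔤)) (hdisj : Disjoint (centerIn 𝔤 V) (derivedOf 𝔤 V)) :
    NondegenerateOn B (centerIn 𝔤 V : Set 𝔤) := by
  rw [← derivedOf_sup_centerIn hS hB hV hnd hdisj] at hnd
  exact hnd.of_sup_right (orthogonalOn_centerIn_derivedOf hB V)

theorem nondegenerateOn_univ_iff_derivedOf_and_centerIn (hS : B.IsSymm) (hB : B.lieInvariant 𝔤)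
    (htop : centerIn 𝔤 ⊤ ⊔ derivedOf 𝔤 ⊤ = ⊤) :
    NondegenerateOn B Set.univ ↔
      NondegenerateOn B (derivedOf 𝔤 ⊤ : Set 𝔤) ∧ NondegenerateOn B (centerIn 𝔤 ⊤ : Set 𝔤) := by
  refine ⟨fun hnd => ?_, fun ⟨hder, hcenter⟩ => ?_⟩
  · have hdisj := disjoint_centerIn_derivedOf_top hS hB hnd htop
    exact ⟨nondegenerateOn_derivedOf hB isSub_top hnd hdisj,
      nondegenerateOn_centerIn hS hB isSub_top hnd hdisj⟩
  · rw [← Submodule.top_coe (R := ℂ), ← htop]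
    exact hcenter.sup hS hder (orthogonalOn_centerIn_derivedOf hB ⊤)

end InvariantForms

theorem IsReductive.nondegenerateOn_centralizerOf_and_derivedOf_and_centerIn {k 𝔤 : Type*}
    [Field k] [LieRing 𝔤] [LieAlgebra ℂ 𝔤] [FiniteDimensional ℂ 𝔤] [Module k 𝔤] [SMul k ℂ]
    [IsScalarTower k ℂ 𝔤] [FiniteDimensional k 𝔤] {B : LinearMap.BilinForm k 𝔤} {X : 𝔤}
    (hred : IsReductive 𝔤) (hS : B.IsSymm) (hB : B.lieInvariant 𝔤)
    (hnd : NondegenerateOn B Set.univ) (hX : (LieAlgebra.ad ℂ 𝔤 X).IsSemisimple) :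
    NondegenerateOn B (centralizerOf 𝔤 {X} : Set 𝔤) ∧
      NondegenerateOn B (derivedOf 𝔤 (centralizerOf 𝔤 {X}) : Set 𝔤) ∧
      NondegenerateOn B (centerIn 𝔤 (centralizerOf 𝔤 {X}) : Set 𝔤) := by
  have hV := isSub_centralizerOf (𝔤 := 𝔤) {X}
  have hl := nondegenerateOn_centralizerOf hB hnd hX
  have hdisj := hred.disjoint_centerIn_derivedOf_centralizerOf hS hB hnd hX
  exact ⟨hl, nondegenerateOn_derivedOf hB hV hl hdisj, nondegenerateOn_centerIn hS hB hV hl hdisj⟩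

section RealForms

variable {𝔤 : Type*} [LieRing 𝔤] [LieAlgebra ℝ 𝔤] [LieAlgebra ℂ 𝔤] [IsScalarTower ℝ ℂ 𝔤]
  [FiniteDimensional ℝ 𝔤] {B : LinearMap.BilinForm ℝ 𝔤} {V W : Submodule ℂ 𝔤} {X : 𝔤}

theorem isNeutralOn_of_le_derivedOf (hS : B.IsSymm) (hB : B.lieInvariant 𝔤)
    (hW : W ≤ derivedOf 𝔤 ⊤) (hnd : NondegenerateOn B (W : Set 𝔤)) :
    IsNeutralOn B (W.restrictScalars ℝ) := by
  refine IsNeutralOn.of_antiIsometry hS hnd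
    (J := (LinearMap.lsmul ℂ 𝔤 Complex.I).restrictScalars ℝ)
    (smul_right_injective 𝔤 Complex.I_ne_zero) ?_ fun x _ y hy => ?_
  · rintro _ ⟨x, hx, rfl⟩
    exact W.smul_mem Complex.I hx
  · calc B (Complex.I • x) (Complex.I • y)
        = B x (Complex.I • Complex.I • y) :=
          apply_smul_of_mem_derivedOf hB _ _ (Submodule.smul_mem _ _ (hW hy))
      _ = -B x y := by rw [smul_smul, Complex.I_mul_I, neg_one_smul, map_neg]

theorem isNeutralOn_centralizerOf (hS : B.IsSymm) (hB : B.lieInvariant 𝔤) (h : IsNeutralOn B ⊤)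
    (hX : (LieAlgebra.ad ℂ 𝔤 X).IsSemisimple) :
    IsNeutralOn B ((centralizerOf 𝔤 {X}).restrictScalars ℝ) := by
  have hnd : NondegenerateOn B Set.univ := h.nondegenerateOn hS
  rw [← Submodule.restrictScalars_top ℝ ℂ 𝔤, ← centralizerOf_sup_range_ad hX, sup_comm,
    Submodule.restrictScalars_sup] at h
  exact h.of_sup_right hS
    (isNeutralOn_of_le_derivedOf hS hB (range_ad_le_derivedOf X)
      (nondegenerateOn_range_ad hS hB hnd hX))
    ((orthogonalOn_centralizerOf_range_ad hB X).symm hS)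

theorem isNeutralOn_centerIn (hS : B.IsSymm) (hB : B.lieInvariant 𝔤) (hV : IsSub 𝔤 V)
    (h : IsNeutralOn B (V.restrictScalars ℝ))
    (hdisj : Disjoint (centerIn 𝔤 V) (derivedOf 𝔤 V)) :
    IsNeutralOn B ((centerIn 𝔤 V).restrictScalars ℝ) := by
  have hnd : NondegenerateOn B (V : Set 𝔤) := h.nondegenerateOn hS
  rw [← derivedOf_sup_centerIn hS hB hV hnd hdisj, Submodule.restrictScalars_sup] at h
  exact h.of_sup_right hS (isNeutralOn_of_le_derivedOf hS hB (derivedOf_mono le_top)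
    (nondegenerateOn_derivedOf hB hV hnd hdisj)) ((orthogonalOn_centerIn_derivedOf hB V).symm hS)

theorem isNeutralOn_derivedOf (hS : B.IsSymm) (hB : B.lieInvariant 𝔤) (hV : IsSub 𝔤 V)
    (hnd : NondegenerateOn B (V : Set 𝔤)) (hdisj : Disjoint (centerIn 𝔤 V) (derivedOf 𝔤 V)) :
    IsNeutralOn B ((derivedOf 𝔤 V).restrictScalars ℝ) :=
  isNeutralOn_of_le_derivedOf hS hB (derivedOf_mono le_top)
    (nondegenerateOn_derivedOf hB hV hnd hdisj)

theorem isNeutralOn_top_iff_derivedOf_and_centerIn (hS : B.IsSymm) (hB : B.lieInvariant 𝔤)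
    (htop : centerIn 𝔤 ⊤ ⊔ derivedOf 𝔤 ⊤ = ⊤) :
    IsNeutralOn B ⊤ ↔ IsNeutralOn B ((derivedOf 𝔤 ⊤).restrictScalars ℝ) ∧
      IsNeutralOn B ((centerIn 𝔤 ⊤).restrictScalars ℝ) := by
  refine ⟨fun h => ?_, fun ⟨hder, hcenter⟩ => ?_⟩
  · have hnd : NondegenerateOn B Set.univ := h.nondegenerateOn hS
    have hdisj := disjoint_centerIn_derivedOf_top hS hB hnd htop
    exact ⟨isNeutralOn_derivedOf hS hB isSub_top hnd hdisj,
      isNeutralOn_centerIn hS hB isSub_top h hdisj⟩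
  · rw [← Submodule.restrictScalars_top ℝ ℂ 𝔤, ← htop, Submodule.restrictScalars_sup]
    exact hcenter.sup hS hder (orthogonalOn_centerIn_derivedOf hB ⊤)

theorem IsReductive.isNeutralOn_centralizerOf_and_derivedOf_and_centerIn [FiniteDimensional ℂ 𝔤]
    (hred : IsReductive 𝔤) (hS : B.IsSymm) (hB : B.lieInvariant 𝔤) (h : IsNeutralOn B ⊤)
    (hX : (LieAlgebra.ad ℂ 𝔤 X).IsSemisimple) :
    IsNeutralOn B ((centralizerOf 𝔤 {X}).restrictScalars ℝ) ∧
      IsNeutralOn B ((derivedOf 𝔤 (centralizerOf 𝔤 {X})).restrictScalars ℝ) ∧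
      IsNeutralOn B ((centerIn 𝔤 (centralizerOf 𝔤 {X})).restrictScalars ℝ) := by
  have hV := isSub_centralizerOf (𝔤 := 𝔤) {X}
  have hl := isNeutralOn_centralizerOf hS hB h hX
  have hdisj := hred.disjoint_centerIn_derivedOf_centralizerOf hS hB (h.nondegenerateOn hS) hX
  exact ⟨hl, isNeutralOn_derivedOf hS hB hV (hl.nondegenerateOn hS) hdisj,
    isNeutralOn_centerIn hS hB hV hl hdisj⟩

end RealForms

section ManinForms

theorem RInvariant.lieInvariant {𝔤 : Type*} [LieRing 𝔤] [LieAlgebra ℝ 𝔤]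
    {B : LinearMap.BilinForm ℝ 𝔤} (hB : RInvariant 𝔤 B) : B.lieInvariant 𝔤 :=
  fun x y z => eq_neg_of_add_eq_zero_left (hB x y z)

variable {𝔤 : Type*} [LieRing 𝔤] [LieAlgebra ℂ 𝔤]

theorem CInvariant.lieInvariant {B : LinearMap.BilinForm ℂ 𝔤} (hB : CInvariant 𝔤 B) :
    B.lieInvariant 𝔤 :=
  fun x y z => eq_neg_of_add_eq_zero_left (hB x y z)

theorem complexManinFormOn_iff {B : LinearMap.BilinForm ℂ 𝔤} (hS : CSymm 𝔤 B)
    (hB : CInvariant 𝔤 B) (W : Submodule ℂ 𝔤) :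
    ComplexManinFormOn 𝔤 B W ↔ NondegenerateOn B (W : Set 𝔤) :=
  ⟨fun h => h.2.2, fun h => ⟨fun x _ y _ => hS x y, fun z _ x _ y _ => hB z x y, h⟩⟩

theorem complexManinForm_iff {B : LinearMap.BilinForm ℂ 𝔤} (hS : CSymm 𝔤 B)
    (hB : CInvariant 𝔤 B) : ComplexManinForm 𝔤 B ↔ NondegenerateOn B Set.univ :=
  ⟨fun h => h.2.2, fun h => ⟨hS, hB, h⟩⟩

variable [LieAlgebra ℝ 𝔤] [IsScalarTower ℝ ℂ 𝔤] [FiniteDimensional ℝ 𝔤]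

theorem isNeutralOn_restrictScalars_iff {B : LinearMap.BilinForm ℝ 𝔤} (W : Submodule ℂ 𝔤) :
    IsNeutralOn B (W.restrictScalars ℝ) ↔
      SignatureOn 𝔤 B (W.restrictScalars ℝ) (finrank ℂ W) (finrank ℂ W) := by
  refine ⟨fun ⟨n, hn⟩ => ?_, fun h => ⟨_, h⟩⟩
  have hdim : 2 * finrank ℂ W = finrank ℝ (W.restrictScalars ℝ) := by
    rw [← Complex.finrank_real_complex]
    exact Module.finrank_mul_finrank ℝ ℂ W
  have hfin := hn.finrank_eq
  obtain rfl : n = finrank ℂ W := by lia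
  exact hn

theorem realManinFormOn_iff {B : LinearMap.BilinForm ℝ 𝔤} (hS : RSymm 𝔤 B) (hB : RInvariant 𝔤 B)
    (W : Submodule ℂ 𝔤) :
    RealManinFormOn 𝔤 B W ↔ IsNeutralOn B (W.restrictScalars ℝ) := by
  rw [isNeutralOn_restrictScalars_iff]
  exact ⟨fun h => h.2.2, fun h => ⟨fun x _ y _ => hS x y, fun z _ x _ y _ => hB z x y, h⟩⟩

theorem realManinForm_iff {B : LinearMap.BilinForm ℝ 𝔤} (hS : RSymm 𝔤 B) (hB : RInvariant 𝔤 B) :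
    RealManinForm 𝔤 B ↔ IsNeutralOn B ⊤ := by
  rw [← Submodule.restrictScalars_top ℝ ℂ 𝔤, isNeutralOn_restrictScalars_iff, finrank_top]
  exact ⟨fun h => h.2.2, fun h => ⟨hS, hB, h⟩⟩

end ManinForms

theorem manin_form_restriction_to_centralizer_general
    (g : Type*) [LieRing g] [LieAlgebra ℝ g] [LieAlgebra ℂ g] [IsScalarTower ℝ ℂ g]
    [FiniteDimensional ℂ g] [FiniteDimensional ℝ g]
    (hred : IsReductive g)
    (X : g)
    (hXss : (LieAlgebra.ad ℂ g X).IsSemisimple) :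
    (∀ B : g →ₗ[ℝ] g →ₗ[ℝ] ℝ, RSymm g B → RInvariant g B → RNondegOn g B Set.univ →
      RNondegOn g B (centralizerOf g {X}) ∧
      RNondegOn g B (derivedOf g (centralizerOf g {X})) ∧
      RNondegOn g B (centerIn g (centralizerOf g {X}))) ∧
    (∀ B : g →ₗ[ℂ] g →ₗ[ℂ] ℂ, CSymm g B → CInvariant g B → CNondegOn g B Set.univ →
      CNondegOn g B (centralizerOf g {X}) ∧
      CNondegOn g B (derivedOf g (centralizerOf g {X})) ∧
      CNondegOn g B (centerIn g (centralizerOf g {X}))) ∧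
    (∀ B : g →ₗ[ℝ] g →ₗ[ℝ] ℝ, RealManinForm g B →
      RealManinFormOn g B (centralizerOf g {X}) ∧
      RealManinFormOn g B (derivedOf g (centralizerOf g {X})) ∧
      RealManinFormOn g B (centerIn g (centralizerOf g {X}))) ∧
    (∀ B : g →ₗ[ℂ] g →ₗ[ℂ] ℂ, ComplexManinForm g B →
      ComplexManinFormOn g B (centralizerOf g {X}) ∧
      ComplexManinFormOn g B (derivedOf g (centralizerOf g {X})) ∧
      ComplexManinFormOn g B (centerIn g (centralizerOf g {X}))) ∧
    (∀ B : g →ₗ[ℝ] g →ₗ[ℝ] ℝ, RSymm g B → RInvariant g B →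
      (RealManinForm g B ↔
        (RealManinFormOn g B (derivedOf g ⊤) ∧ RealManinFormOn g B (centerIn g ⊤)))) ∧
    (∀ B : g →ₗ[ℂ] g →ₗ[ℂ] ℂ, CSymm g B → CInvariant g B →
      (ComplexManinForm g B ↔
        (ComplexManinFormOn g B (derivedOf g ⊤) ∧ ComplexManinFormOn g B (centerIn g ⊤)))) := by
  have htop := hred.centerIn_sup_derivedOf_top
  refine ⟨fun B hS hI hnd => ?_, fun B hS hI hnd => ?_, fun B ⟨hS, hI, hsig⟩ => ?_,
    fun B ⟨hS, hI, hnd⟩ => ?_, fun B hS hI => ?_, fun B hS hI => ?_⟩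
  · exact hred.nondegenerateOn_centralizerOf_and_derivedOf_and_centerIn ⟨hS⟩ hI.lieInvariant hnd
      hXss
  · exact hred.nondegenerateOn_centralizerOf_and_derivedOf_and_centerIn ⟨hS⟩ hI.lieInvariant hnd
      hXss
  · simp only [realManinFormOn_iff hS hI]
    exact hred.isNeutralOn_centralizerOf_and_derivedOf_and_centerIn ⟨hS⟩ hI.lieInvariant ⟨_, hsig⟩
      hXss
  · simp only [complexManinFormOn_iff hS hI]
    exact hred.nondegenerateOn_centralizerOf_and_derivedOf_and_centerIn ⟨hS⟩ hI.lieInvariant hnd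
      hXss
  · simp only [realManinForm_iff hS hI, realManinFormOn_iff hS hI]
    exact isNeutralOn_top_iff_derivedOf_and_centerIn ⟨hS⟩ hI.lieInvariant htop
  · simp only [complexManinForm_iff hS hI, complexManinFormOn_iff hS hI]
    exact nondegenerateOn_univ_iff_derivedOf_and_centerIn ⟨hS⟩ hI.lieInvariant htop

/-- Corollary of Lemma 2, Delorme.
Let `g` be complex reductive, `X ∈ g` semisimple with `ad X` having only real eigenvalues,
`l` its centralizer, `a` the centre of `l` and `l^der` the derived ideal of `l`.
(i) The restriction of a nondegenerate symmetric invariant `ℝ`- (resp. `ℂ`-) bilinear form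
to `l`, `l^der` and `a` is nondegenerate.
(ii) The restriction of a real (resp. complex) Manin form to `l`, `l^der` and `a` is a
Manin form.
(iii) A symmetric invariant form is a Manin form iff its restrictions to `g^der` and to
the centre of `g` are Manin forms. -/
theorem manin_form_restriction_to_centralizer
    (g : Type*) [LieRing g] [LieAlgebra ℝ g] [LieAlgebra ℂ g] [IsScalarTower ℝ ℂ g]
    [FiniteDimensional ℂ g] [FiniteDimensional ℝ g]
    (hred : IsReductive g)
    (X : g)
    (hXss : (LieAlgebra.ad ℂ g X).IsSemisimple)
    (hXreal : ∀ c : ℂ, (LieAlgebra.ad ℂ g X).HasEigenvalue c → c.im = 0) :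
    -- (i), real and complex versions
    (∀ B : g →ₗ[ℝ] g →ₗ[ℝ] ℝ, RSymm g B → RInvariant g B → RNondegOn g B Set.univ →
      RNondegOn g B (centralizerOf g {X}) ∧
      RNondegOn g B (derivedOf g (centralizerOf g {X})) ∧
      RNondegOn g B (centerIn g (centralizerOf g {X}))) ∧
    (∀ B : g →ₗ[ℂ] g →ₗ[ℂ] ℂ, CSymm g B → CInvariant g B → CNondegOn g B Set.univ →
      CNondegOn g B (centralizerOf g {X}) ∧
      CNondegOn g B (derivedOf g (centralizerOf g {X})) ∧
      CNondegOn g B (centerIn g (centralizerOf g {X}))) ∧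
    -- (ii), real and complex versions
    (∀ B : g →ₗ[ℝ] g →ₗ[ℝ] ℝ, RealManinForm g B →
      RealManinFormOn g B (centralizerOf g {X}) ∧
      RealManinFormOn g B (derivedOf g (centralizerOf g {X})) ∧
      RealManinFormOn g B (centerIn g (centralizerOf g {X}))) ∧
    (∀ B : g →ₗ[ℂ] g →ₗ[ℂ] ℂ, ComplexManinForm g B →
      ComplexManinFormOn g B (centralizerOf g {X}) ∧
      ComplexManinFormOn g B (derivedOf g (centralizerOf g {X})) ∧
      ComplexManinFormOn g B (centerIn g (centralizerOf g {X}))) ∧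
    -- (iii), real and complex versions
    (∀ B : g →ₗ[ℝ] g →ₗ[ℝ] ℝ, RSymm g B → RInvariant g B →
      (RealManinForm g B ↔
        (RealManinFormOn g B (derivedOf g ⊤) ∧ RealManinFormOn g B (centerIn g ⊤)))) ∧
    (∀ B : g →ₗ[ℂ] g →ₗ[ℂ] ℂ, CSymm g B → CInvariant g B →
      (ComplexManinForm g B ↔
        (ComplexManinFormOn g B (derivedOf g ⊤) ∧ ComplexManinFormOn g B (centerIn g ⊤)))) :=
  manin_form_restriction_to_centralizer_general g hred X hXss

end ManinPaper
end
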